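/- arXiv:1509.01870 — 2 statements merged into one kernel-verified Lean document; each statement's English description precedes it below -/
import Mathlib

section
/- Let G be a discrete group and let ∂_F G be a Furstenberg boundary of G; for x ∈ ∂_F G let G_x = {g ∈ G : gx = x} denote the stabilizer subgroup. Then G is not C*-simple if and only if the set {G_x : x ∈ ∂_F G} ⊆ S(G) is a non-trivial amenable uniformly recurrent subgroup of G. -/
noncomputable section
open scoped ENNReal ComplexOrder lp
open MeasureTheory
set_option maxHeartbeats 1000000
set_option synthInstance.maxHeartbeats 1000000

universe u

variable {G : Type u} [Group G]

theorem translat_mem (g : G) (f : ℓ²(G, ℂ)) : Memℓp (fun h => f (g⁻¹ * h)) 2 := by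
  have hf : Summable fun i : G => ‖f i‖ ^ (2 : ℝ≥0∞).toReal :=
    (memℓp_gen_iff (by norm_num)).1 (lp.memℓp f)
  exact memℓp_gen ((Equiv.mulLeft g⁻¹).summable_iff.2 hf)

/-- The left regular representation of `g ∈ G` as a linear isometric bijection of `ℓ²(G)`,
given by `(λ_g ξ)(h) = ξ(g⁻¹ h)`. -/
def lregE (g : G) : ℓ²(G, ℂ) ≃ₗᵢ[ℂ] ℓ²(G, ℂ) :=
{ toFun := fun f => ⟨fun h => f (g⁻¹ * h), translat_mem g f⟩
  invFun := fun f => ⟨fun h => f (g * h), by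
    have := translat_mem g⁻¹ f; simp only [inv_inv] at this; exact this⟩
  map_add' := by intro f₁ f₂; ext h; simp [lp.coeFn_add]; rfl
  map_smul' := by intro c f; ext h; simp [lp.coeFn_smul]
  left_inv := by intro f; ext h; simp
  right_inv := by intro f; ext h; simp
  norm_map' := by
    intro f
    rw [lp.norm_eq_tsum_rpow (by norm_num) f, lp.norm_eq_tsum_rpow (by norm_num)]
    congr 1
    exact (Equiv.mulLeft g⁻¹).tsum_eq (fun h => ‖f h‖ ^ (2 : ℝ≥0∞).toReal) }

/-- The left regular representation `λ` as bounded operators on `ℓ²(G)`. -/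
def lreg (g : G) : ℓ²(G, ℂ) →L[ℂ] ℓ²(G, ℂ) :=
  (lregE g).toContinuousLinearEquiv.toContinuousLinearMap

variable (G) in
/-- The reduced group C*-algebra `C*_λ(G)`: the norm-closed star subalgebra of the algebra of
bounded operators on `ℓ²(G)` generated by the image of the left regular representation. -/
def redCstar : StarSubalgebra ℂ (ℓ²(G, ℂ) →L[ℂ] ℓ²(G, ℂ)) :=
  (StarAlgebra.adjoin ℂ (Set.range (lreg (G := G)))).topologicalClosure

variable (G) in
/-- `G` is C*-simple: `C*_λ(G)` has no closed two-sided ideals other than `{0}` and the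
whole algebra. -/
def IsCstarSimple : Prop :=
  ∀ I : TwoSidedIdeal (redCstar G), IsClosed (I : Set (redCstar G)) → I = ⊥ ∨ I = ⊤

attribute [irreducible] redCstar lreg lregE

variable (G) in
/-- The Chabauty topology on the space of subgroups of `G`: the topology induced from the
product topology on `{0,1}^G` by identifying a subgroup with its indicator function. -/
def chabauty : TopologicalSpace (Subgroup G) :=
  letI : ∀ p : Prop, Decidable p := Classical.propDecidable
  TopologicalSpace.induced (fun (H : Subgroup G) (g : G) => decide (g ∈ H))
    (inferInstance : TopologicalSpace (G → Bool))

attribute [instance] chabauty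

/-- The conjugate subgroup `gHg⁻¹`. -/
def conjSub (g : G) (H : Subgroup G) : Subgroup G :=
  H.map (MulAut.conj g).toMonoidHom

variable (G) in
/-- A uniformly recurrent subgroup of `G`: a nonempty, Chabauty-closed, conjugation-invariant
and minimal (all orbits are dense) collection of subgroups of `G`. -/
def IsURS (X : Set (Subgroup G)) : Prop :=
  X.Nonempty ∧ IsClosed X ∧ (∀ (g : G), ∀ H ∈ X, conjSub g H ∈ X) ∧
    ∀ H ∈ X, ∀ K ∈ X, K ∈ closure {L : Subgroup G | ∃ g : G, L = conjSub g H}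

/-- Left translation of a bounded function on a group `H`. -/
def translInfty {H : Type*} [Group H] (h : H) (f : lp (fun _ : H => ℝ) ∞) :
    lp (fun _ : H => ℝ) ∞ :=
  ⟨fun k => f (h⁻¹ * k), by
    apply memℓp_infty
    have : (Set.range fun k => ‖f (h⁻¹ * k)‖) = Set.range fun k => ‖f k‖ :=
      (Equiv.mulLeft h⁻¹).surjective.range_comp (fun k => ‖f k‖)
    rw [this]
    exact memℓp_infty_iff.1 (lp.memℓp f)⟩

/-- A group `H` is amenable: there exists a left-invariant mean on `ℓ∞(H)`, i.e. a unital
positive linear functional invariant under left translation. -/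
def IsAmenable (H : Type*) [Group H] : Prop :=
  ∃ m : lp (fun _ : H => ℝ) ∞ →ₗ[ℝ] ℝ,
    m 1 = 1 ∧ (∀ f : lp (fun _ : H => ℝ) ∞, (∀ k, 0 ≤ f k) → 0 ≤ m f) ∧
      ∀ (h : H) (f : lp (fun _ : H => ℝ) ∞), m (translInfty h f) = m f

/-- `X` is a `G`-boundary: a nonempty compact Hausdorff `G`-space such that for every regular
Borel probability measure `μ` on `X` and every `x ∈ X`, the point mass `δ_x` lies in the
weak* closure of the orbit `Gμ`. -/
def IsBoundary (G X : Type*) [Group G] [TopologicalSpace X] [CompactSpace X] [T2Space X]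
    [MulAction G X] [ContinuousConstSMul G X] : Prop :=
  Nonempty X ∧
  letI : MeasurableSpace X := borel X
  haveI : BorelSpace X := ⟨rfl⟩
  ∀ (μ : ProbabilityMeasure X) (x : X),
    (⟨Measure.dirac x, Measure.dirac.isProbabilityMeasure⟩ : ProbabilityMeasure X) ∈
      closure {ν : ProbabilityMeasure X |
        ∃ g : G, ν = μ.map ((continuous_const_smul g).measurable.aemeasurable (μ := μ.toMeasure))
          (f := (g • ·))}

/-- `Y` is a Furstenberg boundary of `G`: a `G`-boundary admitting a continuous `G`-equivariant
surjection onto every `G`-boundary. -/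
def IsFurstenberg (G Y : Type u) [Group G] [TopologicalSpace Y] [CompactSpace Y] [T2Space Y]
    [MulAction G Y] [ContinuousConstSMul G Y] : Prop :=
  IsBoundary G Y ∧
  ∀ (X : Type u) (iT : TopologicalSpace X) (iC : @CompactSpace X iT) (iH : @T2Space X iT)
    (iM : MulAction G X) (iS : @ContinuousConstSMul G X iT iM.toSMul),
    @IsBoundary G X _ iT iC iH iM iS →
      ∃ q : Y → X, @Continuous _ _ _ iT q ∧ Function.Surjective q ∧
        ∀ (g : G) (y : Y), q (g • y) = g • q y

/-!
Every state on the functions on a boundary `X` can be translated towards any point mass, so a state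
on a C*-algebra containing a covariant copy of `C(X, ℝ)` can be conjugated until it nearly
concentrates at a given point `x`. If `x` has trivial stabilizer, it then nearly kills every `λ_g`
with `g ≠ 1`, hence it approximates the canonical trace; a state vanishing on an ideal therefore
forces the trace to vanish on it, and the trace is faithful.

Conversely, if `G` is C*-simple and `G_x` is amenable, the representation on `ℓ²(X)` weakly
contains the regular one, so the canonical trace extends to a state on the bounded operators of
`ℓ²(X)`. Moving this state towards a point of the open fixed point set of `g` makes its value at a
conjugate of `g` nearly `1`, and so `g = 1`.

The Furstenberg boundary is extremally disconnected and has amenable stabilizers, because `ℓ^∞(G)`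
maps equivariantly onto its continuous functions: the extreme functionals dominated by a minimal
invariant sublinear functional on `ℓ^∞(G)` have orbit closures that are boundaries. By Frolík's
theorem fixed point sets in an extremally disconnected space are clopen, so `x ↦ G_x` is
continuous and the stabilizers form a uniformly recurrent subgroup.
-/

/-! ### States on `C(X, ℝ)` and boundaries -/

section States

variable {X : Type*} [TopologicalSpace X]

/-- A state on `C(X, ℝ)`: a unital positive linear functional. For compact Hausdorff `X` these are
the regular Borel probability measures, see `IsState.exists_probabilityMeasure`. -/
structure IsState (μ : C(X, ℝ) →ₗ[ℝ] ℝ) : Prop where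
  map_one : μ 1 = 1
  map_nonneg : ∀ F, 0 ≤ F → 0 ≤ μ F

namespace IsState

variable {μ ν : C(X, ℝ) →ₗ[ℝ] ℝ}

theorem map_const (hμ : IsState μ) (c : ℝ) : μ (ContinuousMap.const X c) = c := by
  have : ContinuousMap.const X c = c • (1 : C(X, ℝ)) := by ext; simp
  simp [this, hμ.map_one]

theorem mono (hμ : IsState μ) {F F' : C(X, ℝ)} (h : F ≤ F') : μ F ≤ μ F' := by
  simpa using hμ.map_nonneg (F' - F) (sub_nonneg.2 h)

theorem le_of_forall_le (hμ : IsState μ) {F : C(X, ℝ)} {c : ℝ} (h : ∀ x, F x ≤ c) : μ F ≤ c :=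
  hμ.map_const c ▸ hμ.mono h

theorem of_le (h : ∀ F c, (∀ x, F x ≤ c) → μ F ≤ c) : IsState μ where
  map_one := by
    refine le_antisymm (h 1 1 fun _ => le_rfl) ?_
    have := h (-1) (-1) fun _ => le_rfl
    rw [map_neg] at this
    exact neg_le_neg_iff.1 this
  map_nonneg F hF := by
    have := h (-F) 0 fun x => neg_nonpos.2 (hF x)
    rwa [map_neg, neg_nonpos] at this

theorem midpoint (hμ : IsState μ) (hν : IsState ν) : IsState ((2⁻¹ : ℝ) • (μ + ν)) where
  map_one := by norm_num [hμ.map_one, hν.map_one]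
  map_nonneg F hF := by
    have := hμ.map_nonneg F hF
    have := hν.map_nonneg F hF
    simp only [LinearMap.smul_apply, LinearMap.add_apply, smul_eq_mul]
    positivity

theorem abs_map_le [CompactSpace X] (hμ : IsState μ) (F : C(X, ℝ)) : |μ F| ≤ ‖F‖ := by
  refine abs_le'.2 ⟨hμ.le_of_forall_le fun x => F.apply_le_norm x, ?_⟩
  rw [← map_neg]
  exact hμ.le_of_forall_le fun x => neg_le.1 (F.neg_norm_le_apply x)

protected theorem continuous [CompactSpace X] (hμ : IsState μ) : Continuous μ :=
  AddMonoidHomClass.continuous_of_bound μ 1 fun F => by simpa using hμ.abs_map_le F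

end IsState

/-- The evaluation functional at `x`, i.e. the point mass `δ_x` seen as a state. -/
def evalState (x : X) : C(X, ℝ) →ₗ[ℝ] ℝ :=
  (ContinuousMap.evalCLM ℝ x).toLinearMap

@[simp] theorem evalState_apply (x : X) (F : C(X, ℝ)) : evalState x F = F x := rfl

theorem isState_evalState (x : X) : IsState (evalState x) := .of_le fun _ _ h => h x

variable [MulAction G X] [ContinuousConstSMul G X]

/-- The algebra homomorphism `F ↦ (x ↦ F (g • x))` of `C(X, ℝ)`. -/
def smulPullback (g : G) : C(X, ℝ) →ₐ[ℝ] C(X, ℝ) :=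
  ContinuousMap.compRightAlgHom ℝ ℝ ⟨(g • ·), continuous_const_smul g⟩

@[simp] theorem smulPullback_apply (g : G) (F : C(X, ℝ)) (x : X) :
    smulPullback g F x = F (g • x) := rfl

variable [CompactSpace X]

theorem integrable_continuousMap [MeasurableSpace X] [BorelSpace X] (F : C(X, ℝ))
    (m : Measure X) [IsFiniteMeasure m] : Integrable F m :=
  F.continuous.integrable_of_hasCompactSupport (.of_compactSpace F)

open scoped CompactlySupported in
theorem IsState.exists_probabilityMeasure [T2Space X] [MeasurableSpace X] [BorelSpace X]
    {μ : C(X, ℝ) →ₗ[ℝ] ℝ} (hμ : IsState μ) :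
    ∃ m : ProbabilityMeasure X, ∀ F : C(X, ℝ), ∫ x, F x ∂(m : Measure X) = μ F := by
  let Λ : C_c(X, ℝ) →ₚ[ℝ] ℝ := PositiveLinearMap.mk₀
    { toFun := fun F => μ F.toContinuousMap
      map_add' := fun F F' => μ.map_add F.toContinuousMap F'.toContinuousMap
      map_smul' := fun c F => μ.map_smul c F.toContinuousMap } fun _ hF => hμ.map_nonneg _ hF
  have hΛ : ∀ F : C(X, ℝ), ∫ x, F x ∂(RealRMK.rieszMeasure Λ) = μ F := fun F =>
    RealRMK.integral_rieszMeasure Λ ⟨F, .of_compactSpace F⟩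
  have hprob : IsProbabilityMeasure (RealRMK.rieszMeasure Λ) := by
    have hone := hΛ 1
    rw [hμ.map_one] at hone
    exact isProbabilityMeasure_iff_real.2 (by simpa using hone)
  exact ⟨⟨_, hprob⟩, hΛ⟩

/-- The state `F ↦ ∫ F dm` of a probability measure. -/
def integralState [MeasurableSpace X] [BorelSpace X] (m : ProbabilityMeasure X) :
    C(X, ℝ) →ₗ[ℝ] ℝ where
  toFun F := ∫ x, F x ∂(m : Measure X)
  map_add' F F' := integral_add (integrable_continuousMap F _) (integrable_continuousMap F' _)
  map_smul' c F := integral_const_mul c F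

@[simp] theorem integralState_apply [MeasurableSpace X] [BorelSpace X] (m : ProbabilityMeasure X)
    (F : C(X, ℝ)) : integralState m F = ∫ x, F x ∂(m : Measure X) := rfl

theorem isState_integralState [MeasurableSpace X] [BorelSpace X] (m : ProbabilityMeasure X) :
    IsState (integralState m) where
  map_one := by simp
  map_nonneg _ hF := integral_nonneg hF

-- The functions `0 ≤ F` with `F x = 0` are directed upwards; picking `ν_F ∈ S` with `∫ F dν_F < 1`
-- gives a net converging to `δ_x`, because `F` may be rescaled by `ε⁻¹`.
theorem dirac_mem_closure_of_forall_exists_integral_lt_one [T2Space X] [MeasurableSpace X]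
    [BorelSpace X] {S : Set (ProbabilityMeasure X)} {x : X}
    (h : ∀ F : C(X, ℝ), 0 ≤ F → F x = 0 → ∃ ν ∈ S, ∫ y, F y ∂(ν : Measure X) < 1) :
    diracProba x ∈ closure S := by
  let I := {F : C(X, ℝ) // 0 ≤ F ∧ F x = 0}
  have : Nonempty I := ⟨⟨0, by simp⟩⟩
  have : IsDirectedOrder I := ⟨fun a b => ⟨⟨a + b, add_nonneg a.2.1 b.2.1, by simp [a.2.2, b.2.2]⟩,
    le_add_of_nonneg_right b.2.1, le_add_of_nonneg_left a.2.1⟩⟩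
  choose ν hνS hν using fun F : I => h F.1 F.2.1 F.2.2
  refine mem_closure_of_tendsto (f := ν) (b := Filter.atTop) ?_ (.of_forall hνS)
  rw [ProbabilityMeasure.tendsto_iff_forall_integral_tendsto]
  intro F
  have hFx : ∫ y, F y ∂(diracProba x : Measure X) = F x := integral_dirac F x
  rw [hFx, Metric.tendsto_nhds]
  intro ε hε
  let D : I := ⟨⟨fun y => ε⁻¹ * |F y - F x|, by fun_prop⟩,
    fun y => mul_nonneg (inv_pos.2 hε).le (abs_nonneg _), by simp⟩
  filter_upwards [Filter.eventually_ge_atTop D] with i hi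
  have hFi : Integrable F (ν i : Measure X) := integrable_continuousMap F.toContinuousMap _
  calc dist (∫ y, F y ∂(ν i : Measure X)) (F x)
      = |∫ y, (F y - F x) ∂(ν i : Measure X)| := by
        rw [Real.dist_eq, integral_sub hFi (integrable_const _)]
        simp
    _ ≤ ∫ y, |F y - F x| ∂(ν i : Measure X) := abs_integral_le_integral_abs
    _ ≤ ∫ y, ε * i.1 y ∂(ν i : Measure X) :=
        integral_mono (hFi.sub (integrable_const _)).abs
          ((integrable_continuousMap i.1 _).const_mul ε) fun y => (inv_mul_le_iff₀ hε).1 (hi y)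
    _ < ε := by
        rw [integral_const_mul]
        exact mul_lt_of_lt_one_right hε (hν i)

theorem integral_map_smul [MeasurableSpace X] [BorelSpace X] (g : G) (m : ProbabilityMeasure X)
    (F : C(X, ℝ)) :
    ∫ x, F x ∂((m.map ((continuous_const_smul g).measurable.aemeasurable (μ := m.toMeasure))
      (f := (g • ·)) : ProbabilityMeasure X) : Measure X) =
      integralState m (smulPullback g F) := by
  rw [ProbabilityMeasure.toMeasure_map, integral_map
    (continuous_const_smul g).measurable.aemeasurable F.continuous.aestronglyMeasurable]
  rfl

variable [T2Space X]

-- The right-hand side says that `δ_x` lies in the closed convex hull of the orbit of `μ`; since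
-- point masses are extreme points, this already puts `δ_x` into the closure of the orbit.
theorem isBoundary_iff_forall_isState :
    IsBoundary G X ↔ Nonempty X ∧ ∀ μ : C(X, ℝ) →ₗ[ℝ] ℝ, IsState μ → ∀ (F : C(X, ℝ)) (c : ℝ),
      (∀ g : G, μ (smulPullback g F) ≤ c) → ∀ x, F x ≤ c := by
  let : MeasurableSpace X := borel X
  have : BorelSpace X := ⟨rfl⟩
  refine and_congr_right fun _ => ⟨fun h μ hμ F c hF x => ?_, fun h m x => ?_⟩
  · obtain ⟨m, hm⟩ := hμ.exists_probabilityMeasure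
    have hclosed : IsClosed {ν : ProbabilityMeasure X | ∫ y, F y ∂(ν : Measure X) ≤ c} :=
      isClosed_le (ProbabilityMeasure.continuous_integral_continuousMap F) continuous_const
    have hx := closure_minimal ?_ hclosed (h m x)
    · change ∫ y, F y ∂(Measure.dirac x) ≤ c at hx
      rwa [integral_dirac] at hx
    · rintro _ ⟨g, rfl⟩
      rw [Set.mem_ofPred_eq, integral_map_smul, integralState_apply, hm]
      exact hF g
  · refine dirac_mem_closure_of_forall_exists_integral_lt_one fun F _ hFx => ?_
    by_contra! hF
    have := h _ (isState_integralState m) (-F) (-1) (fun g => by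
      rw [map_neg, map_neg, neg_le_neg_iff, ← integral_map_smul]
      exact hF _ ⟨g, rfl⟩) x
    norm_num [hFx] at this

theorem IsBoundary.isMinimal (hX : IsBoundary G X) : MulAction.IsMinimal G X where
  dense_orbit y := by
    refine dense_iff_inter_open.2 fun U hU ⟨x, hx⟩ => ?_
    obtain ⟨F, hF0, hF1, -⟩ := exists_continuous_zero_one_of_isClosed hU.isClosed_compl
      isClosed_singleton (t := {x}) (by simpa using hx)
    by_contra! hempty
    have horbit : ∀ g : G, g • y ∈ Uᶜ := fun g hg => hempty.subset ⟨hg, g, rfl⟩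
    have := (isBoundary_iff_forall_isState.1 hX).2 _ (isState_evalState y) F 0
      (fun g => (hF0 (horbit g)).le) x
    norm_num [hF1 rfl] at this

end States

/-! ### Minimal invariant sublinear functionals -/

section Sublinear

variable {E V : Type*} [AddCommGroup E] [Module ℝ E] [AddCommGroup V] [Module ℝ V]

/-- Sublinear functionals on a real vector space. -/
structure IsSublinear (p : E → ℝ) : Prop where
  map_add_le : ∀ v w, p (v + w) ≤ p v + p w
  map_smul : ∀ c : ℝ, 0 < c → ∀ v, p (c • v) = c * p v

theorem IsSublinear.map_zero {p : E → ℝ} (hp : IsSublinear p) : p 0 = 0 := by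
  have := hp.map_smul 2 two_pos 0
  rw [smul_zero] at this
  linarith

theorem IsSublinear.neg_map_neg_le {p : E → ℝ} (hp : IsSublinear p) (v : E) : -p (-v) ≤ p v := by
  have := hp.map_add_le v (-v)
  rw [add_neg_cancel, hp.map_zero] at this
  linarith

/-- The linear functionals dominated by `p`, as a subset of the space of all functions on `E` with
the topology of pointwise convergence. -/
def dominated (p : E → ℝ) : Set (E → ℝ) :=
  Set.range ((⇑) : (E →ₗ[ℝ] ℝ) → E → ℝ) ∩ {m | ∀ v, m v ≤ p v}

theorem isClosed_dominated (p : E → ℝ) : IsClosed (dominated p) := by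
  refine (LinearMap.isClosed_range_coe E ℝ (RingHom.id ℝ)).inter ?_
  rw [Set.ofPred_forall]
  exact isClosed_iInter fun v => isClosed_le (continuous_apply v) continuous_const

theorem isCompact_dominated (p : E → ℝ) : IsCompact (dominated p) := by
  refine (isCompact_univ_pi fun v => isCompact_Icc (a := -p (-v)) (b := p v)).of_isClosed_subset
    (isClosed_dominated p) ?_
  rintro _ ⟨⟨m, rfl⟩, hm⟩ v -
  exact ⟨by simpa using neg_le_neg (hm (-v)), hm v⟩

namespace IsSublinear

theorem exists_linearMap_comp_eq {p : E → ℝ} (hp : IsSublinear p) (T : V →ₗ[ℝ] E)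
    (e : V →ₗ[ℝ] ℝ) (h : ∀ v, e v ≤ p (T v)) :
    ∃ m : E →ₗ[ℝ] ℝ, (∀ w, m w ≤ p w) ∧ m ∘ₗ T = e := by
  obtain ⟨s, hs⟩ := T.rangeRestrict.exists_rightInverse_of_surjective
    (LinearMap.range_rangeRestrict T)
  have hTs : ∀ w, T (s w) = w := fun w => congrArg Subtype.val (LinearMap.congr_fun hs w)
  have hker : ∀ v, T v = 0 → e v ≤ 0 := fun v hv => by
    simpa [hv, hp.map_zero] using h v
  obtain ⟨m, hm, hmp⟩ := exists_extension_of_le_sublinear ⟨LinearMap.range T, e ∘ₗ s⟩ p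
    hp.map_smul hp.map_add_le fun w => (h (s w)).trans_eq (congrArg p (hTs w))
  refine ⟨m, hmp, LinearMap.ext fun v => ?_⟩
  have hle := hker (v - s (T.rangeRestrict v)) (by rw [map_sub, hTs]; exact sub_self _)
  have hge := hker (s (T.rangeRestrict v) - v) (by rw [map_sub, hTs]; exact sub_self _)
  rw [map_sub] at hle hge
  exact (hm (T.rangeRestrict v)).trans (le_antisymm (sub_nonpos.1 hge) (sub_nonpos.1 hle))

theorem dominated_nonempty {p : E → ℝ} (hp : IsSublinear p) : (dominated p).Nonempty := by
  obtain ⟨m, hm, -⟩ := hp.exists_linearMap_comp_eq (0 : E →ₗ[ℝ] E) 0 fun _ => hp.map_zero.ge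
  exact ⟨m, ⟨m, rfl⟩, hm⟩

end IsSublinear

/-- Sublinear functionals invariant under a representation. -/
structure IsInvariantSublinear (ρ : Representation ℝ G E) (p : E → ℝ) : Prop
    extends IsSublinear p where
  map_rho : ∀ g v, p (ρ g v) = p v

namespace IsInvariantSublinear

variable {ρ : Representation ℝ G E}

theorem iInf_of_isChain {C : Set (E → ℝ)} (hC : IsChain (· ≤ ·) C) (hne : C.Nonempty)
    (hCρ : ∀ p ∈ C, IsInvariantSublinear ρ p) :
    IsInvariantSublinear ρ (fun v => ⨅ p : C, p.1 v) ∧ ∀ p ∈ C, ∀ v, ⨅ q : C, q.1 v ≤ p v := by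
  obtain ⟨p₀, hp₀⟩ := hne
  have : Nonempty C := ⟨⟨p₀, hp₀⟩⟩
  have hbdd : ∀ v, BddBelow (Set.range fun p : C => p.1 v) := by
    refine fun v => ⟨-p₀ (-v), ?_⟩
    rintro _ ⟨⟨p, hp⟩, rfl⟩
    rcases hC.total hp hp₀ with hle | hle
    · exact (neg_le_neg (hle (-v))).trans ((hCρ p hp).neg_map_neg_le v)
    · exact ((hCρ p₀ hp₀).neg_map_neg_le v).trans (hle v)
  refine ⟨⟨⟨fun v w => ?_, fun c hc v => ?_⟩, fun g v => ?_⟩,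
    fun p hp v => ciInf_le (hbdd v) ⟨p, hp⟩⟩
  · refine le_ciInf_add_ciInf fun p q => ?_
    rcases hC.total p.2 q.2 with hle | hle
    · exact (ciInf_le (hbdd _) p).trans
        (((hCρ p p.2).map_add_le v w).trans (add_le_add_right (hle w) _))
    · exact (ciInf_le (hbdd _) q).trans
        (((hCρ q q.2).map_add_le v w).trans (add_le_add_left (hle v) _))
  · simp only [fun p : C => (hCρ p p.2).map_smul c hc v, Real.mul_iInf_of_nonneg hc.le]
  · simp only [fun p : C => (hCρ p p.2).map_rho g v]

theorem exists_minimal_le {p₀ : E → ℝ} (hp₀ : IsInvariantSublinear ρ p₀) :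
    ∃ p ≤ p₀, Minimal (IsInvariantSublinear ρ) p := by
  refine zorn_le_nonempty₀ (α := (E → ℝ)ᵒᵈ) {p | IsInvariantSublinear ρ (OrderDual.ofDual p)}
    (fun C hCρ hC q hq => ?_) p₀ hp₀
  obtain ⟨hinf, hle⟩ := iInf_of_isChain hC.symm ⟨q, hq⟩ hCρ
  exact ⟨_, hinf, hle⟩

end IsInvariantSublinear

section Minimal

variable {X : Type*} [TopologicalSpace X] [MulAction G X] [ContinuousConstSMul G X]

/-- The sublinear functional `F ↦ sup_g μ(F ∘ g)` on `C(X, ℝ)`; the states it dominates are those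
in the weak* closed convex hull of the orbit of `μ`. -/
def orbitSup (G : Type*) [Group G] [MulAction G X] [ContinuousConstSMul G X]
    (μ : C(X, ℝ) →ₗ[ℝ] ℝ) (F : C(X, ℝ)) : ℝ :=
  ⨆ g : G, μ (smulPullback g F)

variable {μ : C(X, ℝ) →ₗ[ℝ] ℝ}

theorem orbitSup_smulPullback (k : G) (F : C(X, ℝ)) :
    orbitSup G μ (smulPullback k F) = orbitSup G μ F := by
  have : ∀ g : G, smulPullback g (smulPullback k F) = smulPullback (k * g) F := fun g => by
    ext x
    simp [mul_smul]
  simp only [orbitSup, this]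
  exact (Equiv.mulLeft k).surjective.iSup_comp fun g => μ (smulPullback g F)

variable [CompactSpace X]

theorem IsState.le_orbitSup (hμ : IsState μ) (F : C(X, ℝ)) (g : G) :
    μ (smulPullback g F) ≤ orbitSup G μ F := by
  refine le_ciSup (f := fun g : G => μ (smulPullback g F)) ⟨‖F‖, ?_⟩ g
  rintro _ ⟨k, rfl⟩
  exact hμ.le_of_forall_le fun x => F.apply_le_norm (k • x)

theorem IsState.isSublinear_orbitSup (hμ : IsState μ) : IsSublinear (orbitSup G μ) where
  map_add_le F F' := ciSup_le fun g => by
    rw [map_add, map_add]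
    exact add_le_add (hμ.le_orbitSup F g) (hμ.le_orbitSup F' g)
  map_smul c hc F := by
    simp only [orbitSup, map_smul, smul_eq_mul, Real.mul_iSup_of_nonneg hc.le]

-- `v ↦ sup_g μ(φ v ∘ g)` is an invariant sublinear functional below `p`, hence equal to `p`, so
-- that `e` extends along `φ` to a functional dominated by `orbitSup G μ`.
theorem exists_isState_comp_eq_of_minimal {ρ : Representation ℝ G E} {p : E → ℝ}
    (hp : Minimal (IsInvariantSublinear ρ) p) {φ : E →ₗ[ℝ] C(X, ℝ)}
    (hφρ : ∀ g v, φ (ρ g v) = smulPullback g⁻¹ (φ v)) (hφp : ∀ v x, φ v x ≤ p v)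
    (hμ : IsState μ) {e : E →ₗ[ℝ] ℝ} (he : ∀ v, e v ≤ p v) :
    ∃ ν : C(X, ℝ) →ₗ[ℝ] ℝ, IsState ν ∧ ν ∘ₗ φ = e ∧
      ∀ F c, (∀ g : G, μ (smulPullback g F) ≤ c) → ν F ≤ c := by
  have hsub : IsSublinear (orbitSup G μ) := hμ.isSublinear_orbitSup
  have hinv : IsInvariantSublinear ρ (fun v => orbitSup G μ (φ v)) :=
    { map_add_le := fun v w => by
        rw [map_add]
        exact hsub.map_add_le _ _
      map_smul := fun c hc v => by rw [map_smul, hsub.map_smul c hc]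
      map_rho := fun g v => by rw [hφρ, orbitSup_smulPullback] }
  have hle : p ≤ fun v => orbitSup G μ (φ v) :=
    hp.2 hinv fun v => ciSup_le fun g => hμ.le_of_forall_le fun x => hφp v _
  obtain ⟨ν, hν, hνφ⟩ := hsub.exists_linearMap_comp_eq φ e fun v => (he v).trans (hle v)
  have hνle : ∀ F c, (∀ g : G, μ (smulPullback g F) ≤ c) → ν F ≤ c :=
    fun F c h => (hν F).trans (ciSup_le h)
  exact ⟨ν, .of_le fun F c h => hνle F c fun g => hμ.le_of_forall_le fun x => h _, hνφ, hνle⟩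

end Minimal

end Sublinear

/-! ### Orbit closures of extreme functionals -/

section OrbitClosure

variable {E : Type*} [AddCommGroup E] [Module ℝ E]

section Extreme

variable {X : Type*} [TopologicalSpace X] {p : E → ℝ} {φ : E →ₗ[ℝ] C(X, ℝ)}
  {e : E →ₗ[ℝ] ℝ} {ν : C(X, ℝ) →ₗ[ℝ] ℝ}

-- `e` is the average of `v ↦ ν ((1 + W) * φ v)` and `v ↦ ν ((1 - W) * φ v)`, both dominated by `p`.
theorem map_mul_eq_zero_of_mem_extremePoints (he : ⇑e ∈ (dominated p).extremePoints ℝ)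
    (hφp : ∀ v x, φ v x ≤ p v) (hν : IsState ν) (hνφ : ∀ v, ν (φ v) = e v) {W : C(X, ℝ)}
    (hW : ν W = 0) (hW1 : ∀ x, |W x| ≤ 1) (v : E) : ν (W * φ v) = 0 := by
  have hdom : ∀ W' : C(X, ℝ), ν W' = 0 → (∀ x, -1 ≤ W' x) →
      ⇑(ν ∘ₗ LinearMap.mulLeft ℝ (1 + W') ∘ₗ φ) ∈ dominated p := by
    refine fun W' hW' hW'1 => ⟨⟨_, rfl⟩, fun w => ?_⟩
    have hle : (1 + W') * φ w ≤ p w • (1 + W') := fun x => by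
      have := mul_le_mul_of_nonneg_left (hφp w x) (neg_le_iff_add_nonneg'.1 (hW'1 x))
      simpa [mul_comm, mul_add] using this
    simpa [hν.map_one, hW'] using hν.mono hle
  have hpos := hdom W hW fun x => (abs_le.1 (hW1 x)).1
  have hneg := hdom (-W) (by rw [map_neg, hW, neg_zero]) fun x => neg_le_neg (abs_le.1 (hW1 x)).2
  have hmid : ⇑e ∈ openSegment ℝ (⇑(ν ∘ₗ LinearMap.mulLeft ℝ (1 + W) ∘ₗ φ))
      (⇑(ν ∘ₗ LinearMap.mulLeft ℝ (1 + -W) ∘ₗ φ)) := by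
    refine ⟨2⁻¹, 2⁻¹, by norm_num, by norm_num, by norm_num, funext fun w => ?_⟩
    simp only [Pi.add_apply, Pi.smul_apply, LinearMap.comp_apply, LinearMap.mulLeft_apply, add_mul,
      one_mul, neg_mul, map_add, map_neg, hνφ, smul_eq_mul]
    ring
  have := congrFun (he.2 hpos hneg hmid) v
  simpa [add_mul, hνφ] using this

variable [CompactSpace X]

theorem map_mul_of_mem_extremePoints (he : ⇑e ∈ (dominated p).extremePoints ℝ)
    (hφp : ∀ v x, φ v x ≤ p v) (hν : IsState ν) (hνφ : ∀ v, ν (φ v) = e v) (F : C(X, ℝ)) (v : E) :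
    ν (F * φ v) = ν F * e v := by
  let W : C(X, ℝ) := F - ContinuousMap.const X (ν F)
  let c := (‖W‖ + 1)⁻¹
  have hc : 0 < c := by positivity
  have hW : ν W = 0 := by rw [map_sub, hν.map_const, sub_self]
  have hcW : ∀ x, |(c • W) x| ≤ 1 := fun x => by
    rw [ContinuousMap.smul_apply, smul_eq_mul, abs_mul, abs_of_pos hc,
      inv_mul_le_one₀ (by positivity)]
    exact (W.norm_coe_le_norm x).trans (le_add_of_nonneg_right zero_le_one)
  have h0 := map_mul_eq_zero_of_mem_extremePoints he hφp hν hνφ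
    (by rw [map_smul, hW, smul_zero]) hcW v
  rw [smul_mul_assoc, map_smul, smul_eq_mul, mul_eq_zero_iff_left hc.ne', sub_mul, map_sub] at h0
  have hconst : ContinuousMap.const X (ν F) * φ v = ν F • φ v := rfl
  rw [hconst, map_smul, hνφ, smul_eq_mul] at h0
  exact sub_eq_zero.1 h0

-- The functions `F` with `ν (H * F) = ν H * F x₀` for all `H` form a closed subalgebra.
theorem eq_evalState_of_mem_extremePoints [T2Space X] (he : ⇑e ∈ (dominated p).extremePoints ℝ)
    (hφp : ∀ v x, φ v x ≤ p v) (hφsep : ∀ x y, (∀ v, φ v x = φ v y) → x = y) (hν : IsState ν)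
    (hνφ : ∀ v, ν (φ v) = e v) {x₀ : X} (hx₀ : ∀ v, φ v x₀ = e v) : ν = evalState x₀ := by
  let A : Subalgebra ℝ C(X, ℝ) :=
    { carrier := {F | ∀ H, ν (H * F) = ν H * F x₀}
      mul_mem' := fun {F F'} hF hF' H => by
        rw [← mul_assoc, hF', hF, ContinuousMap.mul_apply, mul_assoc]
      add_mem' := fun {F F'} hF hF' H => by
        rw [mul_add, map_add, hF, hF', ContinuousMap.add_apply, mul_add]
      algebraMap_mem' := fun c H => by
        rw [← Algebra.commutes, ← Algebra.smul_def, map_smul, smul_eq_mul, mul_comm]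
        simp }
  have hAclosed : IsClosed (A : Set C(X, ℝ)) := by
    change IsClosed {F | ∀ H, ν (H * F) = ν H * F x₀}
    rw [Set.ofPred_forall]
    refine isClosed_iInter fun H => isClosed_eq ?_ ?_
    · exact hν.continuous.comp (continuous_const_mul H)
    · exact continuous_const.mul (ContinuousEvalConst.continuous_eval_const x₀)
  have hAsep : A.SeparatesPoints := fun x y hxy => by
    obtain ⟨v, hv⟩ : ∃ v, φ v x ≠ φ v y := by
      by_contra! h
      exact hxy (hφsep x y h)
    refine ⟨_, ⟨φ v, fun H => ?_, rfl⟩, hv⟩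
    rw [map_mul_of_mem_extremePoints he hφp hν hνφ, hx₀]
  have hA := ContinuousMap.subalgebra_topologicalClosure_eq_top_of_separatesPoints A hAsep
  ext F
  have hF : F ∈ A := by
    rw [← SetLike.mem_coe, ← hAclosed.closure_eq, ← Subalgebra.topologicalClosure_coe, hA]
    trivial
  simpa [hν.map_one] using hF 1

end Extreme

variable (ρ : Representation ℝ G E) (e : E → ℝ)

/-- The closure, for pointwise convergence, of the orbit of `e` under the action dual to `ρ`. -/
def orbitClosure : Set (E → ℝ) :=
  closure (Set.range fun g : G => e ∘ ρ g⁻¹)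

variable {ρ e}

theorem comp_mem_orbitClosure (g : G) : e ∘ ρ g⁻¹ ∈ orbitClosure ρ e :=
  subset_closure ⟨g, rfl⟩

theorem mem_orbitClosure_self : e ∈ orbitClosure ρ e :=
  subset_closure ⟨1, by ext; simp⟩

theorem orbitClosure_subset {S : Set (E → ℝ)} (hS : IsClosed S) (h : ∀ g : G, e ∘ ρ g⁻¹ ∈ S) :
    orbitClosure ρ e ⊆ S :=
  closure_minimal (Set.range_subset_iff.2 h) hS

theorem continuous_comp_rho (g : G) : Continuous fun m : E → ℝ => m ∘ ρ g :=
  continuous_pi fun v => continuous_apply (ρ g v)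

theorem comp_mem_orbitClosure_of_mem (g : G) {m : E → ℝ} (hm : m ∈ orbitClosure ρ e) :
    m ∘ ρ g⁻¹ ∈ orbitClosure ρ e := by
  refine orbitClosure_subset (isClosed_closure.preimage (continuous_comp_rho g⁻¹)) (fun k => ?_) hm
  have : e ∘ ρ (g * k)⁻¹ = (e ∘ ρ k⁻¹) ∘ ρ g⁻¹ := by
    ext v
    simp [mul_inv_rev]
  rw [Set.mem_preimage, ← this]
  exact comp_mem_orbitClosure (g * k)

instance : MulAction G (orbitClosure ρ e) where
  smul g m := ⟨m.1 ∘ ρ g⁻¹, comp_mem_orbitClosure_of_mem g m.2⟩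
  one_smul m := Subtype.ext (funext fun v => by
    change m.1 (ρ 1⁻¹ v) = m.1 v
    simp)
  mul_smul g k m := Subtype.ext (funext fun v => by
    change m.1 (ρ (g * k)⁻¹ v) = m.1 (ρ k⁻¹ (ρ g⁻¹ v))
    simp [mul_inv_rev])

theorem smul_orbitClosure_apply (g : G) (m : orbitClosure ρ e) (v : E) :
    (g • m).1 v = m.1 (ρ g⁻¹ v) := rfl

instance : ContinuousConstSMul G (orbitClosure ρ e) where
  continuous_const_smul g :=
    ((continuous_comp_rho g⁻¹).comp continuous_subtype_val).subtype_mk _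

variable {p : E → ℝ}

theorem comp_mem_dominated (hp : IsInvariantSublinear ρ p) (g : G) {m : E → ℝ}
    (hm : m ∈ dominated p) : m ∘ ρ g ∈ dominated p := by
  obtain ⟨⟨m, rfl⟩, hmp⟩ := hm
  exact ⟨⟨m ∘ₗ ρ g, rfl⟩, fun v => (hmp (ρ g v)).trans_eq (hp.map_rho g v)⟩

theorem comp_mem_extremePoints_dominated (hp : IsInvariantSublinear ρ p) (g : G) {m : E → ℝ}
    (hm : m ∈ (dominated p).extremePoints ℝ) : m ∘ ρ g ∈ (dominated p).extremePoints ℝ := by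
  have hinv : ∀ m' : E → ℝ, (m' ∘ ρ g⁻¹) ∘ ρ g = m' := fun m' => by
    ext v
    simp
  refine ⟨comp_mem_dominated hp g hm.1, fun a ha b hb ⟨s, t, hs, ht, hst, hab⟩ => ?_⟩
  have := hm.2 (comp_mem_dominated hp g⁻¹ ha) (comp_mem_dominated hp g⁻¹ hb)
    ⟨s, t, hs, ht, hst, by
      ext v
      simpa using congrFun hab (ρ g⁻¹ v)⟩
  rw [← this, hinv]

theorem orbitClosure_subset_dominated (hp : IsInvariantSublinear ρ p) (he : e ∈ dominated p) :
    orbitClosure ρ e ⊆ dominated p :=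
  orbitClosure_subset (isClosed_dominated p) fun g => comp_mem_dominated hp g⁻¹ he

theorem compactSpace_orbitClosure (hp : IsInvariantSublinear ρ p) (he : e ∈ dominated p) :
    CompactSpace (orbitClosure ρ e) :=
  isCompact_iff_compactSpace.1 ((isCompact_dominated p).of_isClosed_subset isClosed_closure
    (orbitClosure_subset_dominated hp he))

/-- The map `v ↦ (m ↦ m v)` from `E` to the continuous functions on an orbit closure of linear
functionals. -/
def orbitClosureEval (hp : IsInvariantSublinear ρ p) (he : e ∈ dominated p) :
    E →ₗ[ℝ] C(orbitClosure ρ e, ℝ) where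
  toFun v := ⟨fun m => m.1 v, (continuous_apply v).comp continuous_subtype_val⟩
  map_add' v w := ContinuousMap.ext fun m => by
    obtain ⟨m', hm'⟩ := (orbitClosure_subset_dominated hp he m.2).1
    simp [← hm']
  map_smul' c v := ContinuousMap.ext fun m => by
    obtain ⟨m', hm'⟩ := (orbitClosure_subset_dominated hp he m.2).1
    simp [← hm']

@[simp] theorem orbitClosureEval_apply (hp : IsInvariantSublinear ρ p) (he : e ∈ dominated p)
    (v : E) (m : orbitClosure ρ e) : orbitClosureEval hp he v m = m.1 v := rfl

theorem orbitClosureEval_rho (hp : IsInvariantSublinear ρ p) (he : e ∈ dominated p) (g : G)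
    (v : E) :
    orbitClosureEval hp he (ρ g v) = smulPullback g⁻¹ (orbitClosureEval hp he v) := by
  ext m
  simp [smul_orbitClosure_apply]

theorem isBoundary_orbitClosure (hp : Minimal (IsInvariantSublinear ρ) p)
    (he : e ∈ (dominated p).extremePoints ℝ) [CompactSpace (orbitClosure ρ e)] :
    IsBoundary G (orbitClosure ρ e) := by
  refine isBoundary_iff_forall_isState.2 ⟨⟨⟨e, mem_orbitClosure_self⟩⟩, fun μ hμ F c hF m => ?_⟩
  let φ := orbitClosureEval hp.1 he.1
  have hφp : ∀ v m, φ v m ≤ p v := fun v m => (orbitClosure_subset_dominated hp.1 he.1 m.2).2 v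
  have horbit : ∀ g : G, F ⟨e ∘ ρ g⁻¹, comp_mem_orbitClosure g⟩ ≤ c := fun g => by
    have hg := comp_mem_extremePoints_dominated hp.1 g⁻¹ he
    obtain ⟨⟨e', he'⟩, he'p⟩ := hg.1
    obtain ⟨ν, hν, hνφ, hνle⟩ := exists_isState_comp_eq_of_minimal hp (φ := φ)
      (orbitClosureEval_rho hp.1 he.1) hφp hμ (e := e') fun v => (congrFun he' v).trans_le (he'p v)
    have hνeval := eq_evalState_of_mem_extremePoints (he' ▸ hg) hφp
      (fun _ _ h => Subtype.ext (funext h)) hν (LinearMap.congr_fun hνφ)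
      (x₀ := ⟨_, comp_mem_orbitClosure g⟩) fun v => (congrFun he' v).symm
    simpa [hνeval] using hνle F c hF
  have hdense : Dense (Set.range fun g : G =>
      (⟨e ∘ ρ g⁻¹, comp_mem_orbitClosure g⟩ : orbitClosure ρ e)) := by
    rw [Subtype.dense_iff, ← Set.range_comp]
    exact subset_rfl
  exact (isClosed_le F.continuous continuous_const).closure_subset_iff.2
    (Set.range_subset_iff.2 horbit) (hdense m)

end OrbitClosure

/-! ### Equivariant maps into the functions on a Furstenberg boundary -/

section Furstenberg

variable (G) in
/-- The left translation representation of `G` on `ℓ^∞(G)`. -/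
def translRep : Representation ℝ G ℓ^∞(G, ℝ) where
  toFun g :=
    { toFun := translInfty g
      map_add' := fun _ _ => rfl
      map_smul' := fun _ _ => rfl }
  map_one' := by
    ext f k
    exact congrArg f (by simp)
  map_mul' g h := by
    ext f k
    exact congrArg f (by simp [mul_assoc])

@[simp] theorem translRep_apply (g : G) (f : ℓ^∞(G, ℝ)) (k : G) :
    translRep G g f k = f (g⁻¹ * k) := rfl

theorem bddAbove_range_linfty {ι : Type*} (f : ℓ^∞(ι, ℝ)) : BddAbove (Set.range f) :=
  ⟨‖f‖, by
    rintro _ ⟨k, rfl⟩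
    exact (le_abs_self _).trans (lp.norm_apply_le_norm ENNReal.top_ne_zero f k)⟩

variable (G) in
theorem isInvariantSublinear_iSup :
    IsInvariantSublinear (translRep G) (fun f : ℓ^∞(G, ℝ) => ⨆ k, f k) where
  map_add_le f f' := ciSup_le fun k =>
    add_le_add (le_ciSup (bddAbove_range_linfty f) k) (le_ciSup (bddAbove_range_linfty f') k)
  map_smul c hc f := by
    simp only [lp.coeFn_smul, Pi.smul_apply, smul_eq_mul, Real.mul_iSup_of_nonneg hc.le]
  map_rho g f := (Equiv.mulLeft g⁻¹).surjective.iSup_comp f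

section OrbitPullback

variable {Y : Type*} [TopologicalSpace Y] [CompactSpace Y] [MulAction G Y]

/-- The pullback `F ↦ (k ↦ F (k • x))` along an orbit map, the real form of the Poisson
transform. -/
def orbitPullback (x : Y) : C(Y, ℝ) →ₗ[ℝ] ℓ^∞(G, ℝ) where
  toFun F := ⟨fun k => F (k • x), memℓp_infty ⟨‖F‖, by
    rintro _ ⟨k, rfl⟩
    exact F.norm_coe_le_norm _⟩⟩
  map_add' _ _ := rfl
  map_smul' _ _ := rfl

@[simp] theorem orbitPullback_apply (x : Y) (F : C(Y, ℝ)) (k : G) :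
    orbitPullback x F k = F (k • x) := rfl

theorem orbitPullback_smulPullback [ContinuousConstSMul G Y] (x : Y) (g : G) (F : C(Y, ℝ)) :
    orbitPullback x (smulPullback g⁻¹ F) = translRep G g (orbitPullback x F) := by
  ext k
  simp [mul_smul]

end OrbitPullback

variable {Y : Type u} [TopologicalSpace Y] [CompactSpace Y] [T2Space Y] [MulAction G Y]
  [ContinuousConstSMul G Y]

theorem IsFurstenberg.exists_equivariant_linearMap (hY : IsFurstenberg G Y) {E : Type u}
    [AddCommGroup E] [Module ℝ E] {ρ : Representation ℝ G E} {p : E → ℝ}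
    (hp : IsInvariantSublinear ρ p) :
    ∃ Φ : E →ₗ[ℝ] C(Y, ℝ), (∀ g v, Φ (ρ g v) = smulPullback g⁻¹ (Φ v)) ∧ ∀ v y, Φ v y ≤ p v := by
  obtain ⟨p', hp'p, hp'⟩ := hp.exists_minimal_le
  obtain ⟨e, he⟩ := (isCompact_dominated p').extremePoints_nonempty hp'.1.dominated_nonempty
  have := compactSpace_orbitClosure hp'.1 he.1
  obtain ⟨q, hq, -, hqG⟩ := hY.2 (orbitClosure ρ e) _ _ _ _ _ (isBoundary_orbitClosure hp' he)
  refine ⟨(ContinuousMap.compRightAlgHom ℝ ℝ ⟨q, hq⟩).toLinearMap ∘ₗ orbitClosureEval hp'.1 he.1,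
    fun g v => ?_, fun v y => ?_⟩
  · ext y
    simp [smul_orbitClosure_apply, hqG]
  · exact ((orbitClosure_subset_dominated hp'.1 he.1 (q y).2).2 v).trans (hp'p v)

theorem IsFurstenberg.exists_equivariant_linfty_map (hY : IsFurstenberg G Y) :
    ∃ Φ : ℓ^∞(G, ℝ) →ₗ[ℝ] C(Y, ℝ),
      (∀ g f, Φ (translRep G g f) = smulPullback g⁻¹ (Φ f)) ∧
        ∀ f c, (∀ k, f k ≤ c) → ∀ y, Φ f y ≤ c := by
  obtain ⟨Φ, hΦ, hΦle⟩ := hY.exists_equivariant_linearMap (isInvariantSublinear_iSup G)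
  exact ⟨Φ, hΦ, fun f c h y => (hΦle f y).trans (ciSup_le h)⟩

-- The test function `|F - F z| + |Ψ F - Ψ F z|` vanishes at `z`, whereas its average under any
-- translate of the state `(δ_z + δ_z ∘ Ψ) / 2` is at least `|Ψ F z - F z| / 2`.
theorem IsBoundary.eq_self_of_equivariant (hY : IsBoundary G Y) {Ψ : C(Y, ℝ) →ₗ[ℝ] C(Y, ℝ)}
    (hΨ : ∀ F c, (∀ y, F y ≤ c) → ∀ y, Ψ F y ≤ c)
    (hΨG : ∀ (g : G) F, Ψ (smulPullback g F) = smulPullback g (Ψ F)) (F : C(Y, ℝ)) : Ψ F = F := by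
  ext z
  let T : C(Y, ℝ) := ⟨fun y => |F y - F z| + |Ψ F y - Ψ F z|, by fun_prop⟩
  have hstate : ∀ y, IsState (evalState y ∘ₗ Ψ) := fun y => .of_le fun F c h => hΨ F c h y
  have hΨT : ∀ y, |Ψ F y - F z| ≤ Ψ T y := fun y => by
    have hup := (hstate y).mono (F := F - ContinuousMap.const Y (F z)) (F' := T) fun w =>
      (le_abs_self (F w - F z)).trans (le_add_of_nonneg_right (abs_nonneg _))
    have hdown := (hstate y).mono (F := ContinuousMap.const Y (F z) - F) (F' := T) fun w =>
      (neg_sub (F w) (F z) ▸ neg_le_abs (F w - F z)).trans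
        (le_add_of_nonneg_right (abs_nonneg _))
    rw [map_sub, (hstate y).map_const] at hup hdown
    exact abs_sub_le_iff.2 ⟨hup, hdown⟩
  have hT : ∀ y, |Ψ F z - F z| ≤ T y + Ψ T y := fun y =>
    calc |Ψ F z - F z| ≤ |Ψ F z - Ψ F y| + |Ψ F y - F z| := abs_sub_le _ _ _
      _ = |Ψ F y - Ψ F z| + |Ψ F y - F z| := by rw [abs_sub_comm]
      _ ≤ T y + Ψ T y := add_le_add (le_add_of_nonneg_left (abs_nonneg _)) (hΨT y)
  have hz := (isBoundary_iff_forall_isState.1 hY).2 _ ((isState_evalState z).midpoint (hstate z))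
    (-T) (-(2⁻¹ * |Ψ F z - F z|)) (fun g => by
      have hΨTg : Ψ (smulPullback g (-T)) z = -Ψ T (g • z) := by
        rw [hΨG, map_neg]
        rfl
      change 2⁻¹ * (-T (g • z) + Ψ (smulPullback g (-T)) z) ≤ _
      linarith [hT (g • z)]) z
  have hTz : T z = 0 := by simp [T]
  rw [ContinuousMap.neg_apply, hTz, neg_le_neg_iff] at hz
  exact sub_eq_zero.1 (abs_nonpos_iff.1 (by linarith))

theorem IsBoundary.eq_of_linfty_map (hY : IsBoundary G Y) {Φ : ℓ^∞(G, ℝ) →ₗ[ℝ] C(Y, ℝ)}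
    (hΦG : ∀ g f, Φ (translRep G g f) = smulPullback g⁻¹ (Φ f))
    (hΦ : ∀ f c, (∀ k, f k ≤ c) → ∀ y, Φ f y ≤ c) (x : Y) (F : C(Y, ℝ)) :
    Φ (orbitPullback x F) = F := by
  refine hY.eq_self_of_equivariant (Ψ := Φ ∘ₗ orbitPullback x)
    (fun F c h => hΦ _ _ fun k => h (k • x)) (fun g F => ?_) F
  have := orbitPullback_smulPullback x g⁻¹ F
  rw [inv_inv] at this
  simp [this, hΦG]

theorem IsBoundary.linfty_map_le_of_mem (hY : IsBoundary G Y) {Φ : ℓ^∞(G, ℝ) →ₗ[ℝ] C(Y, ℝ)}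
    (hΦG : ∀ g f, Φ (translRep G g f) = smulPullback g⁻¹ (Φ f))
    (hΦ : ∀ f c, (∀ k, f k ≤ c) → ∀ y, Φ f y ≤ c) {x : Y} {U : Set Y} (hU : IsOpen U)
    {f : ℓ^∞(G, ℝ)} {c : ℝ} (hf : ∀ k : G, k • x ∈ U → f k ≤ c) {y : Y} (hy : y ∈ U) :
    Φ f y ≤ c := by
  obtain ⟨F, hF₀, hF₁, hF⟩ := exists_continuous_zero_one_of_isClosed hU.isClosed_compl
    isClosed_singleton (t := {y}) (by simpa using hy)
  let M := ‖f‖ + |c|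
  have hM : 0 ≤ M := by positivity
  have hle := hΦ (f + M • orbitPullback x F) (c + M) (fun k => ?_) y
  · rw [map_add, map_smul, hY.eq_of_linfty_map hΦG hΦ] at hle
    simpa [hF₁ rfl] using hle
  · change f k + M * F (k • x) ≤ c + M
    by_cases hk : k • x ∈ U
    · exact add_le_add (hf k hk) (mul_le_of_le_one_right hM (hF _).2)
    · have hfk := (le_abs_self _).trans (lp.norm_apply_le_norm ENNReal.top_ne_zero f k)
      rw [hF₀ hk, Pi.zero_apply, mul_zero]
      linarith [neg_abs_le c]

-- An equivariant unital positive map `ℓ^∞(G, ℝ) → C(Y, ℝ)` sends the indicator function of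
-- `{k | k • x ∈ U}` to a function which is `1` on `U` and `0` off its closure.
theorem IsFurstenberg.extremallyDisconnected (hY : IsFurstenberg G Y) :
    ExtremallyDisconnected Y := by
  obtain ⟨Φ, hΦG, hΦ⟩ := hY.exists_equivariant_linfty_map
  obtain ⟨x⟩ := hY.1.1
  refine ⟨fun U hU => ?_⟩
  classical
  let χ : ℓ^∞(G, ℝ) := ⟨fun k => if k • x ∈ U then 1 else 0, memℓp_infty ⟨1, by
    rintro _ ⟨k, rfl⟩
    dsimp only
    split_ifs <;> simp⟩⟩
  have hχ (k : G) : χ k = if k • x ∈ U then 1 else 0 := rfl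
  have hone (y : Y) (hy : y ∈ U) : 1 ≤ Φ χ y := by
    have := hY.1.linfty_map_le_of_mem hΦG hΦ (x := x) hU (f := -χ) (c := -1)
      (fun k hk => by rw [lp.coeFn_neg, Pi.neg_apply, hχ, if_pos hk]) hy
    simpa using this
  have hzero (y : Y) (hy : y ∉ closure U) : Φ χ y ≤ 0 :=
    hY.1.linfty_map_le_of_mem hΦG hΦ (x := x) isClosed_closure.isOpen_compl
      (fun k hk => by rw [hχ, if_neg fun h => hk (subset_closure h)]) hy
  have hclosure : closure U = {y | 0 < Φ χ y} := by
    refine Set.Subset.antisymm (fun y hy => ?_) fun y hy => ?_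
    · have hclosed : IsClosed {y | 1 ≤ Φ χ y} := isClosed_le continuous_const (Φ χ).continuous
      exact Set.mem_ofPred_eq.mpr (one_pos.trans_le (closure_minimal hone hclosed hy))
    · by_contra hyU
      exact (hzero y hyU).not_gt hy
  exact hclosure ▸ isOpen_lt continuous_const (Φ χ).continuous

end Furstenberg

/-! ### Frolík's theorem -/

section Frolik

variable {X : Type*} [TopologicalSpace X]

theorem exists_maximal_isOpen_disjoint_preimage (f : X → X) :
    ∃ U : Set X, Maximal (fun U => IsOpen U ∧ Disjoint U (f ⁻¹' U)) U := by
  refine zorn_subset {U | IsOpen U ∧ Disjoint U (f ⁻¹' U)} fun C hC hchain =>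
    ⟨⋃₀ C, ⟨isOpen_sUnion fun s hs => (hC hs).1, Set.disjoint_left.2 ?_⟩,
      fun _ => Set.subset_sUnion_of_mem⟩
  rintro y ⟨s, hs, hys⟩ ⟨t, ht, hyt⟩
  rcases hchain.total hs ht with h | h
  · exact Set.disjoint_left.1 (hC ht).2 (h hys) hyt
  · exact Set.disjoint_left.1 (hC hs).2 hys (h hyt)

theorem isClosed_of_maximal_disjoint_preimage [ExtremallyDisconnected X] (f : X ≃ₜ X) {U : Set X}
    (hU : Maximal (fun U => IsOpen U ∧ Disjoint U (f ⁻¹' U)) U) : IsClosed U := by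
  have hdisj : Disjoint (closure U) (f ⁻¹' closure U) := by
    rw [f.preimage_closure]
    exact ExtremallyDisconnected.disjoint_closure_of_disjoint_isOpen hU.1.2 hU.1.1
      (hU.1.1.preimage f.continuous)
  exact closure_subset_iff_isClosed.1
    (hU.2 ⟨ExtremallyDisconnected.open_closure U hU.1.1, hdisj⟩ subset_closure)

-- A moved point outside `U ∪ f⁻¹ U ∪ f U` would have a neighbourhood `W` for which `U ∪ W`
-- contradicts maximality.
theorem compl_fixedPoints_eq_of_maximal [T2Space X] (f : X ≃ₜ X) {U : Set X}
    (hU : Maximal (fun U => IsOpen U ∧ Disjoint U (f ⁻¹' U)) U) (hUc : IsClosed U) :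
    (Function.fixedPoints f)ᶜ = U ∪ f ⁻¹' U ∪ f.symm ⁻¹' U := by
  have hmoved : ∀ y ∈ U, f y ∉ U := fun y hy hfy =>
    Set.disjoint_left.1 hU.1.2 hy (Set.mem_preimage.2 hfy)
  ext y
  refine ⟨fun hy => ?_, ?_⟩
  · by_contra! hyU
    simp only [Set.mem_union, Set.mem_preimage, not_or] at hyU
    obtain ⟨A, B, hA, hB, hyA, hyB, hAB⟩ := t2_separation hy
    let W : Set X := (B ∩ f ⁻¹' A) ∩ (f ⁻¹' Uᶜ ∩ f.symm ⁻¹' Uᶜ)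
    have hW : IsOpen W := (hB.inter (hA.preimage f.continuous)).inter
      ((hUc.isOpen_compl.preimage f.continuous).inter
        (hUc.isOpen_compl.preimage f.symm.continuous))
    refine hyU.1.1 (hU.2 (y := U ∪ W) ⟨hU.1.1.union hW, Set.disjoint_left.2 ?_⟩
      Set.subset_union_left (.inr ⟨⟨hyB, hyA⟩, hyU.1.2, hyU.2⟩))
    rintro w (hw | hw) (hfw | hfw)
    · exact hmoved w hw hfw
    · exact hfw.2.2 (by simpa using hw)
    · exact hw.2.1 hfw
    · exact Set.disjoint_left.1 hAB hw.1.2 hfw.1.1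
  · rintro ((hy | hy) | hy) hfix
    · exact hmoved y hy (hfix.symm ▸ hy)
    · exact hmoved y (hfix.eq ▸ hy) hy
    · have hsymm : f.symm y = y := f.symm_apply_eq.2 hfix.symm
      rw [Set.mem_preimage, hsymm] at hy
      exact hmoved y hy (hfix.symm ▸ hy)

theorem isClopen_fixedPoints_of_extremallyDisconnected [T2Space X] [ExtremallyDisconnected X]
    (f : X ≃ₜ X) : IsClopen (Function.fixedPoints f) := by
  obtain ⟨U, hU⟩ := exists_maximal_isOpen_disjoint_preimage f
  have hUc := isClosed_of_maximal_disjoint_preimage f hU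
  refine ⟨isClosed_eq f.continuous continuous_id, isClosed_compl_iff.1 ?_⟩
  rw [compl_fixedPoints_eq_of_maximal f hU hUc]
  exact (hUc.union (hUc.preimage f.continuous)).union (hUc.preimage f.symm.continuous)

end Frolik

/-! ### Stabilizers of points of a Furstenberg boundary -/

section Stabilizers

theorem isAmenable_of_invariant_mean {H : Subgroup G} {m : ℓ^∞(G, ℝ) →ₗ[ℝ] ℝ}
    (hm : ∀ f c, (∀ k, f k ≤ c) → m f ≤ c) (hmH : ∀ h ∈ H, ∀ f, m (translRep G h f) = m f) :
    IsAmenable H := by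
  obtain ⟨T, hT, -⟩ := H.exists_isComplement_right 1
  let pull : ℓ^∞(H, ℝ) →ₗ[ℝ] ℓ^∞(G, ℝ) :=
    { toFun := fun f => ⟨fun k => f (hT.equiv k).1, memℓp_infty ⟨‖f‖, by
        rintro _ ⟨k, rfl⟩
        exact lp.norm_apply_le_norm ENNReal.top_ne_zero f _⟩⟩
      map_add' := fun _ _ => rfl
      map_smul' := fun _ _ => rfl }
  have hpull : ∀ f k, pull f k = f (hT.equiv k).1 := fun _ _ => rfl
  refine ⟨m ∘ₗ pull, le_antisymm (hm _ 1 fun k => le_rfl) ?_, fun f hf => ?_, fun h f => ?_⟩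
  · have := hm (-pull 1) (-1) fun k => le_rfl
    rwa [map_neg, neg_le_neg_iff] at this
  · have := hm (-pull f) 0 fun k => neg_nonpos.2 (hf _)
    rwa [map_neg, neg_nonpos] at this
  · have : pull (translInfty h f) = translRep G h (pull f) := by
      ext k
      rw [translRep_apply, hpull, hpull, ← Subgroup.coe_inv, hT.equiv_mul_left]
      rfl
    rw [LinearMap.comp_apply, this, hmH h h.2, LinearMap.comp_apply]

variable {Y : Type u} [TopologicalSpace Y] [CompactSpace Y] [T2Space Y] [MulAction G Y]
  [ContinuousConstSMul G Y]

theorem IsFurstenberg.isAmenable_stabilizer (hY : IsFurstenberg G Y) (y : Y) :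
    IsAmenable (MulAction.stabilizer G y) := by
  obtain ⟨Φ, hΦG, hΦ⟩ := hY.exists_equivariant_linfty_map
  refine isAmenable_of_invariant_mean (m := evalState y ∘ₗ Φ) (fun f c h => hΦ f c h y)
    fun g hg f => ?_
  have hgy : g⁻¹ • y = y := inv_smul_eq_iff.2 (MulAction.mem_stabilizer_iff.1 hg).symm
  simp [hΦG, hgy]

theorem IsFurstenberg.continuous_stabilizer (hY : IsFurstenberg G Y) :
    Continuous fun y : Y => MulAction.stabilizer G y := by
  have := hY.extremallyDisconnected
  refine continuous_induced_rng.2 (continuous_pi fun g => ?_)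
  have hclopen := isClopen_fixedPoints_of_extremallyDisconnected (Homeomorph.smul (α := Y) g)
  rw [continuous_discrete_rng]
  rintro (_ | _)
  · convert hclopen.compl.isOpen using 1
    ext y
    simp [Function.IsFixedPt]
  · convert hclopen.isOpen using 1
    ext y
    simp [Function.IsFixedPt]

instance t2Space_chabauty : T2Space (Subgroup G) :=
  .of_injective_continuous (fun H K h => Subgroup.ext fun g => by simpa using congrFun h g)
    continuous_induced_dom

theorem conjSub_stabilizer {X : Type*} [MulAction G X] (g : G) (x : X) :
    conjSub g (MulAction.stabilizer G x) = MulAction.stabilizer G (g • x) :=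
  (MulAction.stabilizer_smul_eq_stabilizer_map_conj g x).symm

theorem IsFurstenberg.isURS_stabilizers (hY : IsFurstenberg G Y) :
    IsURS G {H : Subgroup G | ∃ x : Y, H = MulAction.stabilizer G x} := by
  have hcont := hY.continuous_stabilizer
  have := hY.1.isMinimal
  obtain ⟨x⟩ := hY.1.1
  have hrange : {H : Subgroup G | ∃ x : Y, H = MulAction.stabilizer G x} =
      Set.range fun x : Y => MulAction.stabilizer G x := by
    ext
    simp only [Set.mem_ofPred_eq, Set.mem_range, eq_comm]
  refine ⟨⟨_, x, rfl⟩, hrange ▸ (isCompact_range hcont).isClosed, ?_, ?_⟩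
  · rintro g _ ⟨x, rfl⟩
    exact ⟨g • x, conjSub_stabilizer g x⟩
  · rintro _ ⟨x, rfl⟩ _ ⟨y, rfl⟩
    refine map_mem_closure hcont (MulAction.dense_orbit G x y) ?_
    rintro _ ⟨g, rfl⟩
    exact ⟨g, (conjSub_stabilizer g x).symm⟩

end Stabilizers

/-! ### States of C*-algebras -/

section CStarStates

theorem exists_strongDual_comp_eq {V E : Type*} [AddCommGroup V] [Module ℂ V]
    [NormedAddCommGroup E] [NormedSpace ℂ E] (T : V →ₗ[ℂ] E) (L : V →ₗ[ℂ] ℂ)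
    (h : ∀ v, ‖L v‖ ≤ ‖T v‖) : ∃ f : StrongDual ℂ E, ‖f‖ ≤ 1 ∧ ∀ v, f (T v) = L v := by
  obtain ⟨s, hs⟩ := T.rangeRestrict.exists_rightInverse_of_surjective T.range_rangeRestrict
  have hTs : ∀ y, T (s y) = y := fun y => congrArg Subtype.val (LinearMap.congr_fun hs y)
  let f₀ : StrongDual ℂ T.range :=
    (L ∘ₗ s).mkContinuous 1 fun y => by simpa [hTs] using h (s y)
  obtain ⟨f, hf, hnorm⟩ := exists_extension_norm_eq T.range f₀
  refine ⟨f, hnorm.trans_le (LinearMap.mkContinuous_norm_le _ zero_le_one _), fun v => ?_⟩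
  have hcoe : (T.rangeRestrict v : E) = T v := rfl
  have hker := h (s (T.rangeRestrict v) - v)
  rw [map_sub, map_sub, hTs, hcoe, sub_self, norm_zero, norm_le_zero_iff,
    sub_eq_zero] at hker
  exact (hf (T.rangeRestrict v)).trans hker

variable {A : Type*} [CStarAlgebra A]

theorem norm_add_I_smul_one_sq_le [Nontrivial A] {a : A} (ha : IsSelfAdjoint a) (t : ℝ) :
    ‖a + (t * Complex.I) • 1‖ ^ 2 ≤ ‖a‖ ^ 2 + t ^ 2 := by
  have hI : (t : ℂ) * Complex.I * (t * Complex.I) = -(t ^ 2 : ℝ) := by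
    push_cast
    linear_combination (t : ℂ) ^ 2 * Complex.I_mul_I
  have hstar : star (a + (t * Complex.I) • 1) * (a + (t * Complex.I) • 1) =
      a * a + ((t ^ 2 : ℝ) : ℂ) • 1 := by
    simp [ha.star_eq, mul_add, add_mul, smul_smul, hI]
  rw [sq, ← CStarRing.norm_star_mul_self, hstar]
  refine (norm_add_le _ _).trans (add_le_add ((norm_mul_le a a).trans_eq (sq _).symm) ?_)
  rw [norm_smul, CStarRing.norm_one, mul_one, Complex.norm_real, Real.norm_of_nonneg (sq_nonneg t)]

-- `|f (a + it)|² ≤ ‖a‖² + t²` for all real `t` forces `Im f(a) = 0`.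
theorem im_apply_eq_zero_of_isSelfAdjoint {f : StrongDual ℂ A} (hf : ‖f‖ ≤ 1) (hf1 : f 1 = 1)
    {a : A} (ha : IsSelfAdjoint a) : (f a).im = 0 := by
  have : Nontrivial A := nontrivial_of_ne 1 0 fun h => by simp [h] at hf1
  have hbound : ∀ t : ℝ, ((f a).im + t) ^ 2 ≤ ‖a‖ ^ 2 + t ^ 2 := fun t => by
    have him : (f a).im + t = (f (a + (t * Complex.I) • 1)).im := by simp [hf1]
    calc ((f a).im + t) ^ 2 ≤ ‖f (a + (t * Complex.I) • 1)‖ ^ 2 := by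
          rw [him, ← sq_abs]
          gcongr
          exact Complex.abs_im_le_norm _
      _ ≤ ‖a + (t * Complex.I) • 1‖ ^ 2 := by
          gcongr
          exact f.le_of_opNorm_le hf _ |>.trans_eq (one_mul _)
      _ ≤ ‖a‖ ^ 2 + t ^ 2 := norm_add_I_smul_one_sq_le ha t
  by_contra him
  have := hbound ((‖a‖ ^ 2 + 1) / (f a).im)
  have hcancel : (f a).im * ((‖a‖ ^ 2 + 1) / (f a).im) = ‖a‖ ^ 2 + 1 := mul_div_cancel₀ _ him
  nlinarith [sq_nonneg (f a).im, sq_nonneg ‖a‖]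

variable [PartialOrder A] [StarOrderedRing A]

theorem exists_positiveLinearMap_eq {f : StrongDual ℂ A} (hf : ‖f‖ ≤ 1) (hf1 : f 1 = 1) :
    ∃ φ : A →ₚ[ℂ] ℂ, ∀ a, φ a = f a := by
  refine ⟨PositiveLinearMap.mk₀ f.toLinearMap fun a ha => ?_, fun a => rfl⟩
  have him := im_apply_eq_zero_of_isSelfAdjoint hf hf1 (IsSelfAdjoint.of_nonneg ha)
  have hle : a ≤ algebraMap ℝ A ‖a‖ := (IsSelfAdjoint.of_nonneg ha).le_algebraMap_norm_self
  have hnorm : ‖algebraMap ℝ A ‖a‖ - a‖ ≤ ‖a‖ :=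
    ((CStarAlgebra.mem_Icc_algebraMap_iff_norm_le (norm_nonneg a)).1
      ⟨sub_nonneg.2 hle, sub_le_self _ ha⟩).2
  have hre : ‖a‖ - (f a).re ≤ ‖a‖ := by
    have hf_sub : f (algebraMap ℝ A ‖a‖ - a) = ‖a‖ - f a := by
      rw [map_sub, IsScalarTower.algebraMap_apply ℝ ℂ A, Algebra.algebraMap_eq_smul_one, map_smul,
        hf1]
      simp
    calc ‖a‖ - (f a).re = (f (algebraMap ℝ A ‖a‖ - a)).re := by simp [hf_sub]
      _ ≤ ‖f (algebraMap ℝ A ‖a‖ - a)‖ := Complex.re_le_norm _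
      _ ≤ 1 * ‖algebraMap ℝ A ‖a‖ - a‖ := f.le_of_opNorm_le hf _
      _ ≤ ‖a‖ := by rwa [one_mul]
  exact Complex.nonneg_iff.2 ⟨by simpa using hre, him.symm⟩

theorem exists_state_of_norm_le {V : Type*} [AddCommGroup V] [Module ℂ V] (T : V →ₗ[ℂ] A)
    (L : V →ₗ[ℂ] ℂ) (h : ∀ v, ‖L v‖ ≤ ‖T v‖) {e : V} (hT : T e = 1) (hL : L e = 1) :
    ∃ φ : A →ₚ[ℂ] ℂ, φ 1 = 1 ∧ ∀ v, φ (T v) = L v := by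
  obtain ⟨f, hf, hfT⟩ := exists_strongDual_comp_eq T L h
  have hf1 : f 1 = 1 := by rw [← hT, hfT, hL]
  obtain ⟨φ, hφ⟩ := exists_positiveLinearMap_eq hf hf1
  exact ⟨φ, by rw [hφ, hf1], fun v => by rw [hφ, hfT]⟩

theorem norm_toPreGNS_sq (φ : A →ₚ[ℂ] ℂ) (a : A) :
    ‖φ.toPreGNS a‖ ^ 2 = (φ (star a * a)).re := by
  have := φ.preGNS_norm_sq (φ.toPreGNS a)
  rw [φ.ofPreGNS_toPreGNS] at this
  exact_mod_cast congrArg Complex.re this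

theorem norm_map_star_mul_sq_le (φ : A →ₚ[ℂ] ℂ) (a b : A) :
    ‖φ (star a * b)‖ ^ 2 ≤ (φ (star a * a)).re * (φ (star b * b)).re := by
  have hinner : φ (star a * b) = inner ℂ (φ.toPreGNS a) (φ.toPreGNS b) := rfl
  rw [← norm_toPreGNS_sq, ← norm_toPreGNS_sq, ← mul_pow, hinner]
  gcongr
  exact norm_inner_le_norm _ _

theorem norm_map_mul_one_sub_le {φ : A →ₚ[ℂ] ℂ} (hφ : φ 1 = 1) {a v : A} (ha₀ : 0 ≤ a)
    (ha₁ : a ≤ 1) (hv : ‖v‖ ≤ 1) : ‖φ (v * (1 - a))‖ ≤ √(1 - (φ a).re) := by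
  refine Real.le_sqrt_of_sq_le ?_
  have hb₀ : 0 ≤ 1 - a := sub_nonneg.2 ha₁
  have hbb : star (1 - a) * (1 - a) ≤ 1 - a := by
    rw [(IsSelfAdjoint.of_nonneg hb₀).star_eq, ← sq]
    simpa using CStarAlgebra.pow_antitone hb₀ (sub_le_self _ ha₀) one_le_two
  have hvv : star (star v) * star v ≤ 1 := by
    refine (CStarAlgebra.star_mul_le_algebraMap_norm_sq).trans ?_
    rw [norm_star, ← map_one (algebraMap ℝ A)]
    exact algebraMap_mono A (pow_le_one₀ (norm_nonneg v) hv)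
  calc ‖φ (v * (1 - a))‖ ^ 2
      ≤ (φ (star (star v) * star v)).re * (φ (star (1 - a) * (1 - a))).re := by
        simpa only [star_star] using norm_map_star_mul_sq_le φ (star v) (1 - a)
    _ ≤ (φ 1).re * (φ (1 - a)).re := by
        gcongr
        · exact (Complex.nonneg_iff.1 (φ.map_nonneg (star_mul_self_nonneg _))).1
        · simp [hφ]
    _ = 1 - (φ a).re := by simp [hφ]

theorem norm_map_one_sub_mul_le {φ : A →ₚ[ℂ] ℂ} (hφ : φ 1 = 1) {a v : A} (ha₀ : 0 ≤ a)
    (ha₁ : a ≤ 1) (hv : ‖v‖ ≤ 1) : ‖φ ((1 - a) * v)‖ ≤ √(1 - (φ a).re) := by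
  have := norm_map_mul_one_sub_le hφ ha₀ ha₁ ((norm_star v).trans_le hv)
  rwa [← norm_star, ← map_star, star_mul, star_star, star_sub, star_one,
    (IsSelfAdjoint.of_nonneg ha₀).star_eq] at this

theorem norm_map_le_of_mul_mul_eq_zero {φ : A →ₚ[ℂ] ℂ} (hφ : φ 1 = 1) {a v : A} (ha₀ : 0 ≤ a)
    (ha₁ : a ≤ 1) (hv : ‖v‖ ≤ 1) (h : a * v * a = 0) : ‖φ v‖ ≤ 2 * √(1 - (φ a).re) := by
  have hnorm : ‖a * v‖ ≤ 1 := (norm_mul_le a v).trans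
    (mul_le_one₀ ((CStarAlgebra.norm_le_one_iff_of_nonneg a).2 ha₁) (norm_nonneg v) hv)
  have hsplit : v = (1 - a) * v + a * v * (1 - a) := by
    rw [mul_sub, h]
    noncomm_ring
  calc ‖φ v‖ = ‖φ ((1 - a) * v) + φ (a * v * (1 - a))‖ := by rw [← map_add, ← hsplit]
    _ ≤ √(1 - (φ a).re) + √(1 - (φ a).re) := norm_add_le_of_le
        (norm_map_one_sub_mul_le hφ ha₀ ha₁ hv) (norm_map_mul_one_sub_le hφ ha₀ ha₁ hnorm)
    _ = 2 * √(1 - (φ a).re) := (two_mul _).symm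

end CStarStates

/-! ### Unitary representations in C*-algebras -/

section UnitaryRepresentations

variable {A B : Type*} [CStarAlgebra A] [CStarAlgebra B]

/-- The extension of a unitary representation `w : G →* unitary A` to the group algebra. -/
def groupAlgebraLift (w : G →* unitary A) : MonoidAlgebra ℂ G →ₐ[ℂ] A :=
  MonoidAlgebra.lift ℂ A G ((unitary A).subtype.comp w)

@[simp] theorem groupAlgebraLift_single (w : G →* unitary A) (g : G) (c : ℂ) :
    groupAlgebraLift w (.single g c) = c • (w g : A) := by
  simp [groupAlgebraLift]

theorem exists_pos_forall_norm_map_le (b : MonoidAlgebra ℂ G) {ε : ℝ} (hε : 0 < ε) :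
    ∃ δ > 0, ∀ f : MonoidAlgebra ℂ G →ₗ[ℂ] ℂ,
      (∀ g ∈ b.coeff.support, ‖f (.single g 1)‖ ≤ δ) → ‖f b‖ ≤ ε := by
  have hC : 0 < ∑ g ∈ b.coeff.support, ‖b.coeff g‖ + 1 := by positivity
  refine ⟨ε / (∑ g ∈ b.coeff.support, ‖b.coeff g‖ + 1), div_pos hε hC, fun f hf => ?_⟩
  have hsum : f b = ∑ g ∈ b.coeff.support, b.coeff g * f (.single g 1) := by
    conv_lhs => rw [← MonoidAlgebra.sum_coeff_single b, Finsupp.sum, map_sum]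
    exact Finset.sum_congr rfl fun g _ => by rw [← smul_eq_mul, ← map_smul]; simp
  calc ‖f b‖ ≤ ∑ g ∈ b.coeff.support,
        ‖b.coeff g‖ * (ε / (∑ g ∈ b.coeff.support, ‖b.coeff g‖ + 1)) := by
        refine hsum ▸ norm_sum_le_of_le _ fun g hg => (norm_mul_le _ _).trans ?_
        exact mul_le_mul_of_nonneg_left (hf g hg) (norm_nonneg _)
    _ ≤ ε := by
        rw [← Finset.sum_mul, mul_div_left_comm]
        exact mul_le_of_le_one_right hε.le ((div_le_one hC).2 (le_add_of_nonneg_right zero_le_one))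

theorem star_unitary_mul (w : G →* unitary A) (g k : G) :
    star (w g : A) * (w k : A) = (w (g⁻¹ * k) : A) := by
  rw [map_mul, map_inv, ← Unitary.star_eq_inv]
  rfl

theorem map_star_groupAlgebraLift_mul_eq {w : G →* unitary A} {v : G →* unitary B}
    {φ : A →ₗ[ℂ] ℂ} {ψ : B →ₗ[ℂ] ℂ} (h : ∀ g, φ (w g) = ψ (v g)) (a b : MonoidAlgebra ℂ G) :
    φ (star (groupAlgebraLift w a) * groupAlgebraLift w b) =
      ψ (star (groupAlgebraLift v a) * groupAlgebraLift v b) := by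
  induction a using MonoidAlgebra.induction_linear with
  | zero => simp
  | add a a' ha ha' => simp only [map_add, star_add, add_mul, ha, ha']
  | single g c =>
    induction b using MonoidAlgebra.induction_linear with
    | zero => simp
    | add b b' hb hb' => simp only [map_add, mul_add, hb, hb']
    | single k d =>
      simp only [groupAlgebraLift_single, star_smul, smul_mul_smul_comm, map_smul,
        star_unitary_mul, h]

variable [PartialOrder A] [StarOrderedRing A] [PartialOrder B] [StarOrderedRing B]

-- By simplicity the GNS representation of `φ` is isometric.
theorem norm_le_of_forall_re_map_le
    (hA : ∀ I : TwoSidedIdeal A, IsClosed (I : Set A) → I = ⊥ ∨ I = ⊤)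
    {φ : A →ₚ[ℂ] ℂ} (hφ : φ 1 = 1) {x : A} {C : ℝ} (hC : 0 ≤ C)
    (h : ∀ c, (φ (star (x * c) * (x * c))).re ≤ C ^ 2 * (φ (star c * c)).re) : ‖x‖ ≤ C := by
  let ρ := φ.gnsStarAlgHom
  have hnorm : ∀ c, ‖(φ.toPreGNS c : φ.GNS)‖ ^ 2 = (φ (star c * c)).re := fun c => by
    rw [UniformSpace.Completion.norm_coe, norm_toPreGNS_sq]
  have hρ : Function.Injective ρ := by
    rw [← TwoSidedIdeal.ker_eq_bot]
    refine (hA _ ?_).resolve_right fun htop => ?_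
    · have hker : (TwoSidedIdeal.ker ρ : Set A) = ρ ⁻¹' {0} :=
        Set.ext fun c => TwoSidedIdeal.mem_ker ρ
      exact hker ▸ isClosed_singleton.preimage (map_continuous ρ)
    · have hone : ρ 1 = 0 := (TwoSidedIdeal.mem_ker ρ).1 (htop ▸ TwoSidedIdeal.mem_top A)
      have hzero : (φ.toPreGNS 1 : φ.GNS) = 0 := by
        simpa using congrArg (· (φ.toPreGNS 1 : φ.GNS)) hone
      have := hnorm 1
      norm_num [hzero, hφ] at this
  rw [← NonUnitalStarAlgHom.norm_map ρ hρ x]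
  refine ContinuousLinearMap.opNorm_le_bound _ hC fun ξ => ?_
  induction ξ using UniformSpace.Completion.induction_on with
  | hp => exact isClosed_le (by fun_prop) (by fun_prop)
  | ih c =>
    refine le_of_sq_le_sq ?_ (by positivity)
    have hρc : ρ x (c : φ.GNS) = (φ.toPreGNS (x * φ.ofPreGNS c) : φ.GNS) :=
      φ.gnsNonUnitalStarAlgHom_apply_coe
    rw [hρc, hnorm, mul_pow]
    exact (h _).trans_eq (congrArg _ (hnorm _).symm)

theorem norm_groupAlgebraLift_le
    (hA : ∀ I : TwoSidedIdeal A, IsClosed (I : Set A) → I = ⊥ ∨ I = ⊤)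
    {w : G →* unitary A} (hw : DenseRange (groupAlgebraLift w)) {v : G →* unitary B}
    {φ : A →ₚ[ℂ] ℂ} (hφ : φ 1 = 1) {ψ : B →ₚ[ℂ] ℂ} (h : ∀ g, φ (w g) = ψ (v g))
    (b : MonoidAlgebra ℂ G) : ‖groupAlgebraLift w b‖ ≤ ‖groupAlgebraLift v b‖ := by
  refine norm_le_of_forall_re_map_le hA hφ (norm_nonneg _) fun c => ?_
  have hφψ := map_star_groupAlgebraLift_mul_eq (φ := φ.toLinearMap) (ψ := ψ.toLinearMap) h
  have hcont : Continuous φ := map_continuous φ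
  induction c using hw.induction_on with
  | hp => exact isClosed_le (by fun_prop) (by fun_prop)
  | ih c =>
    have hle := CStarAlgebra.star_left_conjugate_le_norm_smul (a := groupAlgebraLift v c)
      (b := star (groupAlgebraLift v b) * groupAlgebraLift v b)
    rw [CStarRing.norm_star_mul_self, ← sq] at hle
    have hre := (Complex.le_def.1 (OrderHomClass.mono ψ hle)).1
    simp only [PositiveLinearMap.coe_toLinearMap] at hφψ
    rw [← map_mul, hφψ, hφψ, map_mul (groupAlgebraLift v), star_mul]
    simpa [mul_assoc, ← Complex.ofReal_pow] using hre

end UnitaryRepresentations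

/-! ### Covariant representations of boundary actions -/

section Covariant

variable {X : Type*} [TopologicalSpace X]

section

variable [T2Space X] [MulAction G X] [ContinuousConstSMul G X]

theorem exists_isOpen_forall_smul_notMem {s : Finset G} {x : X} (hs : ∀ g ∈ s, g • x ≠ x) :
    ∃ U : Set X, IsOpen U ∧ x ∈ U ∧ ∀ g ∈ s, ∀ y ∈ U, g • y ∉ U := by
  have hsmall : ∀ᶠ U in (nhds x).smallSets, ∀ g ∈ s, ∀ y ∈ U, g • y ∉ U :=
    (Filter.eventually_all_finset s).2 fun g hg => by
      obtain ⟨V, W, hV, hW, hgx, hx, hVW⟩ := t2_separation (hs g hg)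
      exact Filter.eventually_smallSets.2 ⟨W ∩ (g • ·) ⁻¹' V, Filter.inter_mem (hW.mem_nhds hx)
        ((hV.preimage (continuous_const_smul g)).mem_nhds hgx),
        fun t ht y hy hgy => Set.disjoint_left.1 hVW (ht hy).2 (ht hgy).1⟩
  obtain ⟨V, hV, hVs⟩ := Filter.eventually_smallSets.1 hsmall
  exact ⟨interior V, isOpen_interior, mem_interior_iff_mem_nhds.2 hV, hVs _ interior_subset⟩

theorem exists_bump_mul_smulPullback_eq_zero [CompactSpace X] {s : Finset G} {x : X}
    (hs : ∀ g ∈ s, g • x ≠ x) :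
    ∃ F : C(X, ℝ), 0 ≤ F ∧ F ≤ 1 ∧ F x = 1 ∧ ∀ g ∈ s, F * smulPullback g F = 0 := by
  obtain ⟨U, hU, hxU, hUs⟩ := exists_isOpen_forall_smul_notMem hs
  obtain ⟨F, hF₀, hF₁, hF⟩ := exists_continuous_zero_one_of_isClosed hU.isClosed_compl
    isClosed_singleton (t := {x}) (by simpa using hxU)
  refine ⟨F, fun y => (hF y).1, fun y => (hF y).2, hF₁ rfl, fun g hg => ?_⟩
  ext y
  by_cases hy : y ∈ U
  · simp [hF₀ (hUs g hg y hy)]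
  · simp [hF₀ hy]

end

variable {A : Type*} [CStarAlgebra A] [PartialOrder A]

/-- The real part of the restriction of a functional on `A` to a copy of `C(X, ℝ)` in `A`. -/
def reState (φ : A →ₚ[ℂ] ℂ) (π : C(X, ℝ) →⋆ₐ[ℝ] A) : C(X, ℝ) →ₗ[ℝ] ℝ :=
  Complex.reLm ∘ₗ φ.toLinearMap.restrictScalars ℝ ∘ₗ π.toAlgHom.toLinearMap

@[simp] theorem reState_apply (φ : A →ₚ[ℂ] ℂ) (π : C(X, ℝ) →⋆ₐ[ℝ] A) (F : C(X, ℝ)) :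
    reState φ π F = (φ (π F)).re := rfl

theorem isState_reState [StarOrderedRing A] {φ : A →ₚ[ℂ] ℂ} (hφ : φ 1 = 1)
    (π : C(X, ℝ) →⋆ₐ[ℝ] A) : IsState (reState φ π) where
  map_one := by simp [hφ]
  map_nonneg F hF := (Complex.nonneg_iff.1 (φ.map_nonneg (map_nonneg π hF))).1

/-- A covariant representation of the action of `G` on `X` in a C*-algebra: the unitaries `w g`
implement the action on the functions `π F`. -/
def IsCovariant [MulAction G X] [ContinuousConstSMul G X] (w : G →* unitary A)
    (π : C(X, ℝ) →⋆ₐ[ℝ] A) : Prop :=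
  ∀ g F, (w g : A) * π F = π (smulPullback g⁻¹ F) * w g

variable [StarOrderedRing A] [CompactSpace X] [T2Space X] [MulAction G X] [ContinuousConstSMul G X]

theorem IsBoundary.exists_lt_re_map (hX : IsBoundary G X) {φ : A →ₚ[ℂ] ℂ} (hφ : φ 1 = 1)
    (π : C(X, ℝ) →⋆ₐ[ℝ] A) {F : C(X, ℝ)} {x : X} {c : ℝ} (hc : c < F x) :
    ∃ g : G, c < (φ (π (smulPullback g F))).re := by
  by_contra! hle
  exact hc.not_ge ((isBoundary_iff_forall_isState.1 hX).2 _ (isState_reState hφ π) F c hle x)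

theorem IsBoundary.exists_forall_norm_map_conj_le (hX : IsBoundary G X) {w : G →* unitary A}
    {π : C(X, ℝ) →⋆ₐ[ℝ] A} (hπ : IsCovariant w π) {φ : A →ₚ[ℂ] ℂ} (hφ : φ 1 = 1) {s : Finset G}
    {x : X} (hs : ∀ g ∈ s, g • x ≠ x) {ε : ℝ} (hε : 0 < ε) :
    ∃ k : G, ∀ g ∈ s, ‖φ (w (k⁻¹ * g * k))‖ ≤ ε := by
  obtain ⟨F, hF₀, hF₁, hFx, hFs⟩ := exists_bump_mul_smulPullback_eq_zero hs
  obtain ⟨k, hk⟩ := hX.exists_lt_re_map hφ π (c := 1 - (ε / 2) ^ 2) (F := F) (x := x)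
    (by rw [hFx]; exact sub_lt_self _ (by positivity))
  let a := smulPullback k F
  refine ⟨k, fun g hg => ?_⟩
  have hdisj : a * smulPullback (k⁻¹ * g * k)⁻¹ a = 0 := by
    ext y
    have := DFunLike.congr_fun (hFs g hg) (g⁻¹ • k • y)
    simpa [a, mul_smul, mul_comm] using this
  have haw : π a * w (k⁻¹ * g * k) * π a = 0 := by
    rw [mul_assoc, hπ, ← mul_assoc, ← map_mul, hdisj, map_zero, zero_mul]
  have : Nontrivial A := nontrivial_of_ne 1 0 fun h => by simp [h] at hφ
  have ha₀ : 0 ≤ π a := map_nonneg π fun y => hF₀ (k • y)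
  have ha₁ : π a ≤ 1 := map_one π ▸ OrderHomClass.mono π fun y => hF₁ (k • y)
  calc ‖φ (w (k⁻¹ * g * k))‖ ≤ 2 * √(1 - (φ (π a)).re) :=
        norm_map_le_of_mul_mul_eq_zero hφ ha₀ ha₁ (CStarRing.norm_of_mem_unitary (w _).2).le haw
    _ ≤ 2 * √((ε / 2) ^ 2) := by
        gcongr
        linarith
    _ = ε := by
        rw [Real.sqrt_sq (by positivity)]
        ring

end Covariant

/-! ### Permutation and multiplication operators -/

section PermutationRepresentation

variable {ι κ : Type*} {𝕜 : Type*} [NormedField 𝕜] {p : ℝ≥0∞}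

theorem memℓp_comp_equiv (e : ι ≃ κ) {f : κ → 𝕜} (hf : Memℓp f p) : Memℓp (f ∘ e) p := by
  rcases p.trichotomy with rfl | rfl | hp
  · exact memℓp_zero (hf.finite_dsupport.preimage e.injective.injOn)
  · exact memℓp_infty (hf.bddAbove.mono (Set.range_comp_subset_range e fun i => ‖f i‖))
  · exact memℓp_gen ((hf.summable hp).comp_injective e.injective)

variable [Fact (1 ≤ p)]

variable (𝕜 p) in
/-- The isometric isomorphism of `ℓ^p` spaces induced by a bijection of the index sets. -/
def lpCongr (e : ι ≃ κ) : lp (fun _ : ι => 𝕜) p ≃ₗᵢ[𝕜] lp (fun _ : κ => 𝕜) p where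
  toFun ξ := ⟨ξ ∘ e.symm, memℓp_comp_equiv e.symm (lp.memℓp ξ)⟩
  invFun ξ := ⟨ξ ∘ e, memℓp_comp_equiv e (lp.memℓp ξ)⟩
  map_add' _ _ := rfl
  map_smul' _ _ := rfl
  left_inv ξ := lp.ext (funext fun i => congrArg ξ (e.symm_apply_apply i))
  right_inv ξ := lp.ext (funext fun i => congrArg ξ (e.apply_symm_apply i))
  norm_map' ξ := by
    rcases p.trichotomy with rfl | rfl | hp
    · exact absurd (Fact.out : (1 : ℝ≥0∞) ≤ 0) (by norm_num)
    · rw [lp.norm_eq_ciSup, lp.norm_eq_ciSup]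
      exact e.symm.iSup_comp (g := fun i => ‖ξ i‖)
    · rw [lp.norm_eq_tsum_rpow hp, lp.norm_eq_tsum_rpow hp]
      exact congrArg (· ^ (1 / p.toReal)) (e.symm.tsum_eq fun i => ‖ξ i‖ ^ p.toReal)

variable [MulAction G ι]

variable (G ι 𝕜 p) in
/-- The permutation representation on `ℓ^p(ι)` of a group acting on `ι`. -/
def permRep : G →* (lp (fun _ : ι => 𝕜) p ≃ₗᵢ[𝕜] lp (fun _ : ι => 𝕜) p) where
  toFun g := lpCongr 𝕜 p (MulAction.toPerm g)
  map_one' := by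
    ext ξ i
    exact congrArg ξ (show (1 : G)⁻¹ • i = i by simp)
  map_mul' g h := by
    ext ξ i
    exact congrArg ξ (by simp [mul_smul])

@[simp] theorem permRep_apply (g : G) (ξ : lp (fun _ : ι => 𝕜) p) (i : ι) :
    permRep G ι 𝕜 p g ξ i = ξ (g⁻¹ • i) := rfl

theorem permRep_single [DecidableEq ι] (g : G) (i : ι) (c : 𝕜) :
    permRep G ι 𝕜 p g (lp.single p i c) = lp.single p (g • i) c := by
  ext j
  simp [lp.single_apply, Pi.single_apply, inv_smul_eq_iff]

end PermutationRepresentation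

section OperatorsOnEllTwo

variable {ι X : Type*} [MulAction G ι]

variable (G ι) in
/-- The unitary permutation representation on `ℓ²(ι)` of a group acting on `ι`. -/
def permUnitary : G →* unitary (ℓ²(ι, ℂ) →L[ℂ] ℓ²(ι, ℂ)) :=
  Unitary.linearIsometryEquiv.symm.toMonoidHom.comp (permRep G ι ℂ 2)

@[simp] theorem permUnitary_apply (g : G) (ξ : ℓ²(ι, ℂ)) (i : ι) :
    (permUnitary G ι g : ℓ²(ι, ℂ) →L[ℂ] ℓ²(ι, ℂ)) ξ i = ξ (g⁻¹ • i) := rfl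

theorem permUnitary_single [DecidableEq ι] (g : G) (i : ι) (c : ℂ) :
    (permUnitary G ι g : ℓ²(ι, ℂ) →L[ℂ] ℓ²(ι, ℂ)) (lp.single 2 i c) = lp.single 2 (g • i) c :=
  permRep_single g i c

variable [TopologicalSpace X] [CompactSpace X]

/-- The operator of multiplication by a bounded function on `ℓ²(ι)`. -/
def mulOp (f : lp (fun _ : ι => ℂ) ∞) : ℓ²(ι, ℂ) →L[ℂ] ℓ²(ι, ℂ) :=
  lp.holderL 2 (fun _ => ContinuousLinearMap.mul ℂ ℂ) (K := 1) (by simp) f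

@[simp] theorem mulOp_apply (f : lp (fun _ : ι => ℂ) ∞) (ξ : ℓ²(ι, ℂ)) (i : ι) :
    mulOp f ξ i = f i * ξ i := rfl

/-- The representation of `C(X, ℝ)` on `ℓ²(ι)` by multiplication along a map `o : ι → X`. -/
def mulRep (o : ι → X) : C(X, ℝ) →⋆ₐ[ℝ] (ℓ²(ι, ℂ) →L[ℂ] ℓ²(ι, ℂ)) where
  toFun F := mulOp ⟨fun i => (F (o i) : ℂ), memℓp_infty ⟨‖F‖, Set.forall_mem_range.2 fun i =>
    (Complex.norm_real _).trans_le (F.norm_coe_le_norm (o i))⟩⟩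
  map_one' := by ext; simp
  map_mul' _ _ := by ext; simp [mul_assoc]
  map_zero' := by ext; simp
  map_add' _ _ := by ext; simp [add_mul]
  commutes' _ := by ext; simp
  map_star' F := by
    refine (ContinuousLinearMap.eq_adjoint_iff _ _).2 fun ξ η => ?_
    simp [lp.inner_eq_tsum, mul_assoc, mul_left_comm]

@[simp] theorem mulRep_apply (o : ι → X) (F : C(X, ℝ)) (ξ : ℓ²(ι, ℂ)) (i : ι) :
    mulRep o F ξ i = F (o i) * ξ i := rfl

theorem isCovariant_permUnitary_mulRep [MulAction G X] [ContinuousConstSMul G X] {o : ι → X}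
    (ho : ∀ (g : G) i, o (g • i) = g • o i) : IsCovariant (permUnitary G ι) (mulRep o) :=
  fun g F => ContinuousLinearMap.ext fun ξ => lp.ext <| funext fun i =>
    congrArg (fun y => (F y : ℂ) * ξ (g⁻¹ • i)) (ho g⁻¹ i)

end OperatorsOnEllTwo

/-- The positive functional `T ↦ ⟪ξ, T ξ⟫` on the bounded operators of a Hilbert space. -/
def vectorFunctional {H : Type*} [NormedAddCommGroup H] [InnerProductSpace ℂ H] [CompleteSpace H]
    (ξ : H) : (H →L[ℂ] H) →ₚ[ℂ] ℂ :=
  .mk₀ (innerₛₗ ℂ ξ ∘ₗ (ContinuousLinearMap.apply ℂ H ξ).toLinearMap) fun T hT =>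
    (ContinuousLinearMap.nonneg_iff_isPositive T).1 hT |>.inner_nonneg_right ξ

@[simp] theorem vectorFunctional_apply {H : Type*} [NormedAddCommGroup H] [InnerProductSpace ℂ H]
    [CompleteSpace H] (ξ : H) (T : H →L[ℂ] H) : vectorFunctional ξ T = inner ℂ ξ (T ξ) := rfl

/-! ### The reduced group C*-algebra -/

section ReducedCStarAlgebra

theorem coe_adjoin_range {A : Type*} [CStarAlgebra A] (w : G →* unitary A) :
    (StarAlgebra.adjoin ℂ (Set.range fun g => (w g : A)) : Set A) =
      Set.range (groupAlgebraLift w) := by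
  have hstar : star (Set.range fun g => (w g : A)) ⊆ Set.range fun g => (w g : A) := by
    rintro _ ⟨g, hg⟩
    have hinv : star (w g : A) = w g⁻¹ := by simpa using star_unitary_mul w g 1
    exact ⟨g⁻¹, hinv.symm.trans ((congrArg star hg).trans (star_star _))⟩
  refine Set.Subset.antisymm (fun c hc => ?_) ?_
  · have hle : Algebra.adjoin ℂ (Set.range fun g => (w g : A)) ≤ (groupAlgebraLift w).range :=
      Algebra.adjoin_le (Set.range_subset_iff.2 fun g => ⟨.single g 1, by simp⟩)
    rw [SetLike.mem_coe, ← StarSubalgebra.mem_toSubalgebra, StarAlgebra.adjoin_toSubalgebra,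
      Set.union_eq_self_of_subset_right hstar] at hc
    exact hle hc
  · rintro _ ⟨b, rfl⟩
    induction b using MonoidAlgebra.induction_linear with
    | zero => simp
    | add b b' hb hb' => exact map_add (groupAlgebraLift w) b b' ▸ add_mem hb hb'
    | single g c =>
      rw [groupAlgebraLift_single]
      exact SMulMemClass.smul_mem c (StarAlgebra.subset_adjoin ℂ _ ⟨g, rfl⟩)

theorem coe_redCstar :
    (redCstar G : Set (ℓ²(G, ℂ) →L[ℂ] ℓ²(G, ℂ))) =
      closure (Set.range (groupAlgebraLift (permUnitary G G))) := by
  have hlreg : lreg (G := G) = fun g => (permUnitary G G g : ℓ²(G, ℂ) →L[ℂ] ℓ²(G, ℂ)) := by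
    unfold lreg lregE
    rfl
  rw [← coe_adjoin_range, ← hlreg, ← StarSubalgebra.topologicalClosure_coe]
  unfold redCstar
  rfl

instance : IsClosed (redCstar G : Set (ℓ²(G, ℂ) →L[ℂ] ℓ²(G, ℂ))) :=
  coe_redCstar (G := G) ▸ isClosed_closure

instance : CStarAlgebra (redCstar G) := StarSubalgebra.cstarAlgebra _

theorem groupAlgebraLift_mem_redCstar (b : MonoidAlgebra ℂ G) :
    groupAlgebraLift (permUnitary G G) b ∈ redCstar G :=
  coe_redCstar (G := G).ge (subset_closure ⟨b, rfl⟩)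

variable (G) in
/-- The left regular representation, as a unitary representation in `C*_λ(G)`. -/
def regUnitary : G →* unitary (redCstar G) where
  toFun g := ⟨⟨permUnitary G G g, by simpa using groupAlgebraLift_mem_redCstar (.single g 1)⟩,
    Unitary.mem_iff.2 ⟨Subtype.ext (permUnitary G G g).2.1, Subtype.ext (permUnitary G G g).2.2⟩⟩
  map_one' := Subtype.ext <| Subtype.ext <|
    congrArg (fun u : unitary (ℓ²(G, ℂ) →L[ℂ] ℓ²(G, ℂ)) => u.1) (map_one (permUnitary G G))
  map_mul' g h := Subtype.ext <| Subtype.ext <|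
    congrArg (fun u : unitary (ℓ²(G, ℂ) →L[ℂ] ℓ²(G, ℂ)) => u.1) (map_mul (permUnitary G G) g h)

theorem coe_groupAlgebraLift_regUnitary (b : MonoidAlgebra ℂ G) :
    (groupAlgebraLift (regUnitary G) b : ℓ²(G, ℂ) →L[ℂ] ℓ²(G, ℂ)) =
      groupAlgebraLift (permUnitary G G) b := by
  induction b using MonoidAlgebra.induction_linear with
  | zero => simp
  | add b b' hb hb' => simp [hb, hb']
  | single g c => simp [regUnitary]

theorem denseRange_groupAlgebraLift_regUnitary : DenseRange (groupAlgebraLift (regUnitary G)) := by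
  intro T
  rw [closure_subtype, ← Set.range_comp]
  have hT := coe_redCstar (G := G).le T.2
  rwa [← funext (coe_groupAlgebraLift_regUnitary (G := G))] at hT

theorem commute_permUnitary_mulOpposite {T : ℓ²(G, ℂ) →L[ℂ] ℓ²(G, ℂ)} (hT : T ∈ redCstar G)
    (h : Gᵐᵒᵖ) : Commute T (permUnitary Gᵐᵒᵖ G h) := by
  suffices hrange : Set.range (groupAlgebraLift (permUnitary G G)) ⊆
      {S | Commute S (permUnitary Gᵐᵒᵖ G h : ℓ²(G, ℂ) →L[ℂ] ℓ²(G, ℂ))} from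
    closure_minimal hrange (isClosed_eq (by fun_prop) (by fun_prop)) (coe_redCstar (G := G).le hT)
  rintro _ ⟨b, rfl⟩
  induction b using MonoidAlgebra.induction_linear with
  | zero => simp
  | add b b' hb hb' => exact map_add (groupAlgebraLift (permUnitary G G)) b b' ▸ hb.add_left hb'
  | single g c =>
    rw [Set.mem_ofPred_eq, groupAlgebraLift_single]
    refine Commute.smul_left (ContinuousLinearMap.ext fun ξ => lp.ext <| funext fun k => ?_) c
    exact congrArg ξ (smul_comm h⁻¹ g⁻¹ k)

theorem eq_zero_of_apply_single_one_eq_zero [DecidableEq G] {T : ℓ²(G, ℂ) →L[ℂ] ℓ²(G, ℂ)}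
    (hT : T ∈ redCstar G) (h : T (lp.single 2 1 1) = 0) : T = 0 := by
  have hbasis (g : G) : T (lp.single 2 g 1) = 0 := by
    have hg := permUnitary_single (ι := G) (MulOpposite.op g) 1 1
    rw [op_smul_eq_mul, one_mul] at hg
    rw [← hg, ← mul_apply_eq_comp, commute_permUnitary_mulOpposite hT, mul_apply_eq_comp, h,
      map_zero]
  refine lp.ext_continuousLinearMap (𝕜 := ℂ) ENNReal.ofNat_ne_top fun g => ?_
  ext1
  simpa using hbasis g

end ReducedCStarAlgebra

/-! ### A free orbit in a boundary implies C*-simplicity -/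

section FreeOrbit

theorem one_le_norm_one_sub_of_mem {R : Type*} [NormedRing R] [HasSummableGeomSeries R]
    {I : TwoSidedIdeal R} (hI : I ≠ ⊤) {a : R} (ha : a ∈ I) : 1 ≤ ‖1 - a‖ := by
  by_contra! hlt
  obtain ⟨b, hb⟩ := (Units.oneSub (1 - a) hlt).isUnit.exists_right_inv
  refine hI (I.one_mem_iff.1 ?_)
  rw [← hb, Units.val_oneSub, sub_sub_cancel]
  exact I.mul_mem_right a b ha

variable {A B : Type*} [CStarAlgebra A]

theorem exists_state_forall_mem_eq_zero [CStarAlgebra B] [PartialOrder B] [StarOrderedRing B]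
    {j : A →⋆ₐ[ℂ] B} (hj : Function.Injective j) {I : TwoSidedIdeal A} (hI : I ≠ ⊤) :
    ∃ φ : B →ₚ[ℂ] ℂ, φ 1 = 1 ∧ ∀ a ∈ I, φ (j a) = 0 := by
  let V := I.asIdeal.restrictScalars ℂ × ℂ
  let T : V →ₗ[ℂ] B := j.toAlgHom.toLinearMap ∘ₗ
    (Submodule.subtype _).coprod (LinearMap.toSpanSingleton ℂ A 1)
  have hT (v : V) : T v = j (v.1 + v.2 • 1) := rfl
  have hle (v : V) : ‖v.2‖ ≤ ‖T v‖ := by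
    rcases eq_or_ne v.2 0 with hv | hv
    · simp [hv]
    · have hmem : -(v.2⁻¹ • (v.1 : A)) ∈ I :=
        I.neg_mem (TwoSidedIdeal.mem_asIdeal.1 (Submodule.smul_mem _ v.2⁻¹ v.1.2))
      have heq : v.1 + v.2 • (1 : A) = v.2 • (1 - -(v.2⁻¹ • (v.1 : A))) := by
        rw [sub_neg_eq_add, smul_add, smul_inv_smul₀ hv, add_comm]
      rw [hT, NonUnitalStarAlgHom.norm_map j hj, heq, norm_smul]
      exact le_mul_of_one_le_right (norm_nonneg _) (one_le_norm_one_sub_of_mem hI hmem)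
  obtain ⟨φ, hφ, hφT⟩ := exists_state_of_norm_le T (LinearMap.snd ℂ _ ℂ) hle (e := (0, 1))
    (by simp [hT]) rfl
  refine ⟨φ, hφ, fun a ha => ?_⟩
  calc φ (j a) = φ (T (⟨a, ha⟩, 0)) := by simp [hT]
    _ = 0 := hφT (⟨a, ha⟩, 0)

variable {X : Type*} [TopologicalSpace X] [CompactSpace X] [T2Space X] [MulAction G X]
  [ContinuousConstSMul G X] [PartialOrder A] [StarOrderedRing A]

theorem IsBoundary.exists_norm_map_conj_sub_le (hX : IsBoundary G X) {w : G →* unitary A}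
    {π : C(X, ℝ) →⋆ₐ[ℝ] A} (hπ : IsCovariant w π) {x : X} (hx : ∀ g : G, g • x = x → g = 1)
    {φ τ : A →ₚ[ℂ] ℂ} (hφ : φ 1 = 1) (hτ : τ 1 = 1) (hτw : ∀ g ≠ 1, τ (w g) = 0)
    (b : MonoidAlgebra ℂ G) {ε : ℝ} (hε : 0 < ε) :
    ∃ k : G, ‖φ (w k⁻¹ * groupAlgebraLift w b * w k) - τ (groupAlgebraLift w b)‖ ≤ ε := by
  classical
  obtain ⟨δ, hδ, hb⟩ := exists_pos_forall_norm_map_le b hε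
  obtain ⟨k, hk⟩ := hX.exists_forall_norm_map_conj_le hπ hφ (s := b.coeff.support.erase 1)
    (fun g hg h => (Finset.mem_erase.1 hg).1 (hx g h)) hδ
  refine ⟨k, hb ((φ.toLinearMap ∘ₗ LinearMap.mulLeftRight ℂ ((w k⁻¹ : A), (w k : A)) -
    τ.toLinearMap) ∘ₗ (groupAlgebraLift w).toLinearMap) fun g hg => ?_⟩
  rcases eq_or_ne g 1 with rfl | hne
  · have hkk : ((w k)⁻¹ * w k : A) = 1 := congrArg Subtype.val (inv_mul_cancel (w k))
    simpa [hkk, hφ, hτ] using hδ.le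
  · simpa [hτw g hne] using hk g (Finset.mem_erase.2 ⟨hne, hg⟩)

theorem IsBoundary.map_eq_zero_of_forall_conj (hX : IsBoundary G X) {w : G →* unitary A}
    {π : C(X, ℝ) →⋆ₐ[ℝ] A} (hπ : IsCovariant w π) {x : X} (hx : ∀ g : G, g • x = x → g = 1)
    {φ τ : A →ₚ[ℂ] ℂ} (hφ : φ 1 = 1) (hτ : τ 1 = 1) (hτw : ∀ g ≠ 1, τ (w g) = 0) {a : A}
    (ha : a ∈ closure (Set.range (groupAlgebraLift w)))
    (hφa : ∀ k, φ (w k⁻¹ * a * w k) = 0) : τ a = 0 := by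
  obtain ⟨C, hC⟩ := φ.exists_norm_apply_le
  obtain ⟨D, hD⟩ := τ.exists_norm_apply_le
  refine norm_le_zero_iff.1 (le_of_forall_pos_le_add fun ε hε => ?_)
  obtain ⟨_, ⟨b, rfl⟩, hb⟩ := Metric.mem_closure_iff.1 ha (ε / (2 * (C + D + 1))) (by positivity)
  obtain ⟨k, hk⟩ := hX.exists_norm_map_conj_sub_le hπ hx hφ hτ hτw b (half_pos hε)
  set c := groupAlgebraLift w b
  have hconj : ‖φ (w k⁻¹ * c * w k)‖ ≤ C * dist a c := by
    have hsub : φ (w k⁻¹ * c * w k) = -φ (w k⁻¹ * (a - c) * w k) := by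
      rw [mul_sub, sub_mul, map_sub, hφa, zero_sub, neg_neg]
    rw [hsub, norm_neg, dist_eq_norm]
    simpa using hC (w k⁻¹ * (a - c) * w k)
  have hτac : ‖τ (a - c)‖ ≤ D * dist a c := dist_eq_norm a c ▸ hD (a - c)
  calc ‖τ a‖ = ‖τ (a - c) + (φ (w k⁻¹ * c * w k) - (φ (w k⁻¹ * c * w k) - τ c))‖ := by
        rw [sub_sub_cancel, map_sub, sub_add_cancel]
    _ ≤ D * dist a c + (C * dist a c + ε / 2) :=
        norm_add_le_of_le hτac (norm_sub_le_of_le hconj hk)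
    _ ≤ (C + D + 1) * (ε / (2 * (C + D + 1))) + ε / 2 := by
        nlinarith [dist_nonneg (x := a) (y := c)]
    _ = 0 + ε := by
        field_simp
        ring

theorem vectorFunctional_single_permUnitary {ι : Type*} [MulAction G ι] [DecidableEq ι] (i : ι)
    (g : G) : vectorFunctional (lp.single 2 i 1) (permUnitary G ι g : ℓ²(ι, ℂ) →L[ℂ] ℓ²(ι, ℂ)) =
      (MulAction.stabilizer G i : Set G).indicator 1 g := by
  by_cases h : g • i = i
  · simp [permUnitary_single, h]
  · simp [permUnitary_single, lp.inner_single_left, h, Ne.symm h]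

theorem IsBoundary.isCstarSimple_of_free (hX : IsBoundary G X) {x : X}
    (hx : ∀ g : G, g • x = x → g = 1) : IsCstarSimple G := by
  classical
  refine fun I _ => or_iff_not_imp_right.2 fun hI => ?_
  obtain ⟨φ, hφ, hφI⟩ := exists_state_forall_mem_eq_zero (j := (redCstar G).subtype)
    Subtype.val_injective hI
  refine eq_bot_iff.2 fun a ha => ?_
  let δ : ℓ²(G, ℂ) := lp.single 2 1 1
  let τ := vectorFunctional δ
  have hτ : τ (star a.1 * a.1) = 0 :=
    hX.map_eq_zero_of_forall_conj
      (isCovariant_permUnitary_mulRep (o := fun k : G => k • x) fun g k => mul_smul g k x) hx hφ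
      (by simp)
      (fun g hg => (vectorFunctional_single_permUnitary 1 g).trans (by simp [hg]))
      (coe_redCstar.le (star a * a).2)
      fun k => hφI (regUnitary G k⁻¹ * (star a * a) * regUnitary G k)
        (I.mul_mem_right _ _ (I.mul_mem_left _ _ (I.mul_mem_left _ _ ha)))
  have hδ : a.1 δ = 0 := by
    rwa [vectorFunctional_apply, mul_apply_eq_comp, ContinuousLinearMap.star_eq_adjoint,
      ContinuousLinearMap.adjoint_inner_right, inner_self_eq_zero] at hτ
  exact Subtype.ext (eq_zero_of_apply_single_one_eq_zero a.2 hδ)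

end FreeOrbit

/-! ### Amenability and almost invariant vectors -/

section AlmostInvariantVectors

variable {H : Type*} [Group H]

-- Otherwise `0` could be separated from the convex set of all `(u h μ - μ)_{h ∈ F}`, and the
-- invariant mean of the separating functional along the orbit of `v` would not vanish.
theorem IsAmenable.exists_mem_convexHull_norm_sub_lt (hH : IsAmenable H) {V : Type*}
    [NormedAddCommGroup V] [NormedSpace ℝ V] (u : H →* (V ≃ₗᵢ[ℝ] V)) (v : V) (F : Finset H)
    {ε : ℝ} (hε : 0 < ε) :
    ∃ μ ∈ convexHull ℝ (Set.range fun k => u k v), ∀ h ∈ F, ‖u h μ - μ‖ < ε := by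
  classical
  let L : V →L[ℝ] F → V := .pi fun h => (u h : V →L[ℝ] V) - .id ℝ V
  let P : Set V := convexHull ℝ (Set.range fun k => u k v)
  suffices hmem : (0 : F → V) ∈ closure (L '' P) by
    obtain ⟨_, ⟨μ, hμ, rfl⟩, hdist⟩ := Metric.mem_closure_iff.1 hmem ε hε
    rw [dist_zero_left] at hdist
    exact ⟨μ, hμ, fun h hh => (norm_le_pi_norm (L μ) ⟨h, hh⟩).trans_lt hdist⟩
  by_contra hmem
  obtain ⟨f, c, hc, hf⟩ := geometric_hahn_banach_point_closed
    ((convex_convexHull ℝ _).linear_image L.toLinearMap).closure isClosed_closure hmem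
  rw [map_zero] at hc
  let f' (h : F) : StrongDual ℝ V := f.comp (.single ℝ (fun _ : F => V) h)
  let q (h : F) : lp (fun _ : H => ℝ) ∞ := ⟨fun k => f' h (u k v), memℓp_infty ⟨‖f' h‖ * ‖v‖,
    Set.forall_mem_range.2 fun k => ((f' h).le_opNorm _).trans_eq (by rw [(u k).norm_map])⟩⟩
  let Q : lp (fun _ : H => ℝ) ∞ := ∑ h : F, (translInfty (h : H)⁻¹ (q h) - q h)
  have hQ (k : H) : Q k = f (L (u k v)) := by
    rw [← f.sum_comp_single, lp.coeFn_sum, Finset.sum_apply]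
    refine Finset.sum_congr rfl fun h _ => ?_
    have hL : L (u k v) h = u (h * k) v - u k v := by rw [map_mul]; rfl
    have htr : translInfty (h : H)⁻¹ (q h) k = f' h (u (h * k) v) :=
      congrArg (fun g => f' h (u (g * k) v)) (inv_inv (h : H))
    rw [lp.coeFn_sub, Pi.sub_apply, htr, hL]
    exact (map_sub (f' h) _ _).symm
  obtain ⟨m, hm₁, hm₀, hm⟩ := hH
  have hmQ : m Q = 0 := by simp [Q, hm]
  have hpos : 0 ≤ m (Q - c • 1) := hm₀ _ fun k => by
    have := hf _ (subset_closure ⟨_, subset_convexHull ℝ _ ⟨k, rfl⟩, rfl⟩)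
    rw [ContinuousLinearMap.coe_coe, ← hQ] at this
    exact sub_nonneg.2 ((mul_one c).trans_le this.le)
  rw [map_sub, map_smul, hm₁, hmQ, smul_eq_mul] at hpos
  linarith

theorem prob_of_mem_convexHull_single {ι κ : Type*} [DecidableEq ι] {o : κ → ι}
    {μ : lp (fun _ : ι => ℝ) 1} (hμ : μ ∈ convexHull ℝ (Set.range fun k => lp.single 1 (o k) 1)) :
    (∀ i, 0 ≤ μ i) ∧ HasSum μ 1 ∧ ∀ i ∉ Set.range o, μ i = 0 := by
  let P : Set (lp (fun _ : ι => ℝ) 1) :=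
    {μ | (∀ i, 0 ≤ μ i) ∧ HasSum μ 1 ∧ ∀ i ∉ Set.range o, μ i = 0}
  refine convexHull_min (t := P) (Set.range_subset_iff.2 fun k => ⟨fun i => ?_, ?_, ?_⟩) ?_ hμ
  · rw [lp.single_apply, Pi.single_apply]
    split_ifs <;> simp
  · exact hasSum_pi_single (o k) (1 : ℝ)
  · rintro i hi
    exact lp.single_apply_ne _ _ _ fun h => hi ⟨k, h.symm⟩
  · rintro μ ⟨hμ₀, hμ₁, hμo⟩ ν ⟨hν₀, hν₁, hνo⟩ a b ha hb hab
    refine ⟨fun i => add_nonneg (mul_nonneg ha (hμ₀ i)) (mul_nonneg hb (hν₀ i)), ?_, fun i hi => ?_⟩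
    · have := (hμ₁.mul_left a).add (hν₁.mul_left b)
      rwa [mul_one, mul_one, hab] at this
    · change a * μ i + b * ν i = 0
      simp [hμo i hi, hνo i hi]

theorem hasSum_sq_norm {ι : Type*} (ξ : ℓ²(ι, ℂ)) : HasSum (fun i => ‖ξ i‖ ^ 2) (‖ξ‖ ^ 2) := by
  simpa using lp.hasSum_norm (by norm_num) ξ

theorem sq_sqrt_sub_sqrt_le {a b : ℝ} (ha : 0 ≤ a) (hb : 0 ≤ b) : (√a - √b) ^ 2 ≤ |a - b| := by
  have hab : a - b = (√a - √b) * (√a + √b) := by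
    linear_combination -(Real.sq_sqrt ha) + Real.sq_sqrt hb
  rw [hab, abs_mul, ← sq_abs, sq, abs_of_nonneg (by positivity : 0 ≤ √a + √b)]
  refine mul_le_mul_of_nonneg_left (abs_sub_le_iff.2 ⟨?_, ?_⟩) (abs_nonneg _) <;>
  linarith [Real.sqrt_nonneg a, Real.sqrt_nonneg b]

theorem IsAmenable.exists_norm_permUnitary_sub_le (hH : IsAmenable H) {ι : Type*} [MulAction H ι]
    (x : ι) (F : Finset H) {ε : ℝ} (hε : 0 < ε) :
    ∃ ξ : ℓ²(ι, ℂ), ‖ξ‖ = 1 ∧ (∀ i ∉ MulAction.orbit H x, ξ i = 0) ∧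
      ∀ h ∈ F, ‖(permUnitary H ι h : ℓ²(ι, ℂ) →L[ℂ] ℓ²(ι, ℂ)) ξ - ξ‖ ≤ ε := by
  classical
  obtain ⟨μ, hμ, hμF⟩ := hH.exists_mem_convexHull_norm_sub_lt (permRep H ι ℝ 1)
    (lp.single 1 x 1) F (ε := ε ^ 2) (by positivity)
  simp only [permRep_single] at hμ
  obtain ⟨hμ₀, hμ₁, hμx⟩ := prob_of_mem_convexHull_single hμ
  have hsq (i : ι) : ‖(√(μ i) : ℂ)‖ ^ 2 = μ i := by simp [hμ₀ i]
  let ξ : ℓ²(ι, ℂ) := ⟨fun i => (√(μ i) : ℂ), memℓp_gen (by simpa [hμ₀] using hμ₁.summable)⟩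
  refine ⟨ξ, ?_, fun i hi => ?_, fun h hh => le_of_sq_le_sq ?_ hε.le⟩
  · have hξ : HasSum μ (‖ξ‖ ^ 2) := by simpa only [ξ, hsq] using hasSum_sq_norm ξ
    exact (pow_eq_one_iff_of_nonneg (norm_nonneg ξ) two_ne_zero).1 (hξ.unique hμ₁)
  · simp [ξ, hμx i hi]
  · refine (hasSum_le (fun i => ?_) (hasSum_sq_norm _)
      (lp.hasSum_norm (by norm_num) (permRep H ι ℝ 1 h μ - μ))).trans ?_
    · calc ‖(√(μ (h⁻¹ • i)) : ℂ) - √(μ i)‖ ^ 2 = (√(μ (h⁻¹ • i)) - √(μ i)) ^ 2 := by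
            rw [← Complex.ofReal_sub, Complex.norm_real, Real.norm_eq_abs, sq_abs]
        _ ≤ |μ (h⁻¹ • i) - μ i| := sq_sqrt_sub_sqrt_le (hμ₀ _) (hμ₀ i)
        _ = ‖(permRep H ι ℝ 1 h μ - μ) i‖ ^ (1 : ℝ≥0∞).toReal := by simp
    · simpa using (hμF h hh).le

end AlmostInvariantVectors

/-! ### Weak containment in the regular representation -/

section WeakContainment

theorem norm_vectorFunctional_le {H : Type*} [NormedAddCommGroup H] [InnerProductSpace ℂ H]
    [CompleteSpace H] {ξ : H} (hξ : ‖ξ‖ = 1) (T : H →L[ℂ] H) : ‖vectorFunctional ξ T‖ ≤ ‖T‖ := by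
  refine (norm_inner_le_norm ξ (T ξ)).trans ?_
  simpa [hξ] using T.le_opNorm ξ

variable {ι : Type*} [MulAction G ι]

theorem exists_forall_norm_vectorFunctional_sub_le [DecidableEq ι] {i : ι}
    (hi : IsAmenable (MulAction.stabilizer G i)) (s : Finset G) {ε : ℝ} (hε : 0 < ε) :
    ∃ ξ : ℓ²(G, ℂ), ‖ξ‖ = 1 ∧ ∀ g ∈ s,
      ‖vectorFunctional (lp.single 2 i 1) (permUnitary G ι g : ℓ²(ι, ℂ) →L[ℂ] ℓ²(ι, ℂ)) -
        vectorFunctional ξ (permUnitary G G g : ℓ²(G, ℂ) →L[ℂ] ℓ²(G, ℂ))‖ ≤ ε := by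
  classical
  obtain ⟨ξ, hξ, hsupp, hinv⟩ := hi.exists_norm_permUnitary_sub_le (1 : G)
    (s.subtype (· ∈ MulAction.stabilizer G i)) hε
  have hsupp' (k : G) (hk : k ∉ MulAction.stabilizer G i) : ξ k = 0 :=
    hsupp k fun ⟨h, hh⟩ => hk (by simp [← hh, Subgroup.smul_def])
  refine ⟨ξ, hξ, fun g hg => ?_⟩
  rw [vectorFunctional_single_permUnitary]
  by_cases hgi : g ∈ MulAction.stabilizer G i
  · have hg' := hinv ⟨g, hgi⟩ (Finset.mem_subtype.2 hg)
    have hinner : 1 - vectorFunctional ξ (permUnitary G G g : ℓ²(G, ℂ) →L[ℂ] ℓ²(G, ℂ)) =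
        inner ℂ ξ (ξ - (permUnitary G G g : ℓ²(G, ℂ) →L[ℂ] ℓ²(G, ℂ)) ξ) := by
      simp [hξ]
    rw [Set.indicator_of_mem hgi, Pi.one_apply, hinner]
    refine (norm_inner_le_norm _ _).trans ?_
    rw [hξ, one_mul, norm_sub_rev]
    exact hg'
  · have hzero : vectorFunctional ξ (permUnitary G G g : ℓ²(G, ℂ) →L[ℂ] ℓ²(G, ℂ)) = 0 := by
      rw [vectorFunctional_apply, lp.inner_eq_tsum]
      refine (tsum_congr fun k => ?_).trans tsum_zero
      by_cases hk : k ∈ MulAction.stabilizer G i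
      · have : ξ (g⁻¹ * k) = 0 := hsupp' _ fun h => hgi (by
          simpa using mul_mem hk (inv_mem h))
        simp [this]
      · simp [hsupp' k hk]
    rw [Set.indicator_of_notMem hgi, hzero, sub_zero, norm_zero]
    exact hε.le

theorem norm_vectorFunctional_groupAlgebraLift_le [DecidableEq ι] {i : ι}
    (hi : IsAmenable (MulAction.stabilizer G i)) (b : MonoidAlgebra ℂ G) :
    ‖vectorFunctional (lp.single 2 i 1) (groupAlgebraLift (permUnitary G ι) b)‖ ≤
      ‖groupAlgebraLift (permUnitary G G) b‖ := by
  refine le_of_forall_pos_le_add fun ε hε => ?_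
  obtain ⟨δ, hδ, hb⟩ := exists_pos_forall_norm_map_le b hε
  obtain ⟨ξ, hξ, hs⟩ := exists_forall_norm_vectorFunctional_sub_le hi b.coeff.support hδ
  have hsub := hb ((vectorFunctional (lp.single 2 i 1)).toLinearMap ∘ₗ
    (groupAlgebraLift (permUnitary G ι)).toLinearMap - (vectorFunctional ξ).toLinearMap ∘ₗ
    (groupAlgebraLift (permUnitary G G)).toLinearMap) fun g hg => by simpa using hs g hg
  exact (norm_le_norm_add_norm_sub' _ _).trans (add_le_add (norm_vectorFunctional_le hξ _) hsub)

theorem norm_permUnitary_self_le (hG : IsCstarSimple G) {i : ι}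
    (hi : IsAmenable (MulAction.stabilizer G i)) (b : MonoidAlgebra ℂ G) :
    ‖groupAlgebraLift (permUnitary G G) b‖ ≤ ‖groupAlgebraLift (permUnitary G ι) b‖ := by
  classical
  let : PartialOrder (redCstar G) := CStarAlgebra.spectralOrder (redCstar G)
  have : StarOrderedRing (redCstar G) := CStarAlgebra.spectralOrderedRing (redCstar G)
  obtain ⟨φ, hφ, hφw⟩ := exists_state_of_norm_le (groupAlgebraLift (regUnitary G)).toLinearMap
    ((vectorFunctional (lp.single 2 i 1)).toLinearMap ∘ₗ
      (groupAlgebraLift (permUnitary G ι)).toLinearMap) (e := 1)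
    (fun b => (norm_vectorFunctional_groupAlgebraLift_le hi b).trans_eq
      (congrArg _ (coe_groupAlgebraLift_regUnitary b).symm)) (by simp) (by simp)
  rw [← coe_groupAlgebraLift_regUnitary]
  exact norm_groupAlgebraLift_le hG denseRange_groupAlgebraLift_regUnitary hφ
    (ψ := vectorFunctional (lp.single 2 i 1)) (fun g => by simpa using hφw (.single g 1)) b

theorem exists_state_permUnitary_eq_zero (hG : IsCstarSimple G) {i : ι}
    (hi : IsAmenable (MulAction.stabilizer G i)) :
    ∃ φ : (ℓ²(ι, ℂ) →L[ℂ] ℓ²(ι, ℂ)) →ₚ[ℂ] ℂ, φ 1 = 1 ∧ ∀ g ≠ 1, φ (permUnitary G ι g) = 0 := by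
  classical
  let δ : ℓ²(G, ℂ) := lp.single 2 1 1
  have hδ : ‖δ‖ = 1 := by simp [δ, lp.norm_single]
  have hle (b : MonoidAlgebra ℂ G) :
      ‖vectorFunctional δ (groupAlgebraLift (permUnitary G G) b)‖ ≤
        ‖groupAlgebraLift (permUnitary G ι) b‖ :=
    (norm_vectorFunctional_le hδ _).trans (norm_permUnitary_self_le hG hi b)
  obtain ⟨φ, hφ, hφw⟩ := exists_state_of_norm_le (groupAlgebraLift (permUnitary G ι)).toLinearMap
    ((vectorFunctional δ).toLinearMap ∘ₗ (groupAlgebraLift (permUnitary G G)).toLinearMap)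
    (e := 1) hle (by simp) (by simp [hδ])
  refine ⟨φ, hφ, fun g hg => ?_⟩
  calc φ (permUnitary G ι g)
      = vectorFunctional δ (permUnitary G G g : ℓ²(G, ℂ) →L[ℂ] ℓ²(G, ℂ)) := by
        simpa using hφw (.single g 1)
    _ = 0 := (vectorFunctional_single_permUnitary 1 g).trans (by simp [hg])

end WeakContainment

/-! ### C*-simplicity implies topological freeness -/

section TopologicallyFree

variable {X : Type*} [TopologicalSpace X] [CompactSpace X] [MulAction G X]

theorem permUnitary_mul_mulRep_eq_of_forall_smul_eq {g : G} {F : C(X, ℝ)}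
    (hF : ∀ y, F y ≠ 0 → g • y = y) :
    (permUnitary G X g : ℓ²(X, ℂ) →L[ℂ] ℓ²(X, ℂ)) * mulRep id F = mulRep id F := by
  refine ContinuousLinearMap.ext fun ξ => lp.ext <| funext fun y => ?_
  change (F (g⁻¹ • y) : ℂ) * ξ (g⁻¹ • y) = F y * ξ y
  by_cases hy : g • y = y
  · rw [inv_smul_eq_iff.2 hy.symm]
  · have hy' : g • g⁻¹ • y ≠ g⁻¹ • y := fun h => hy (MulAction.injective g⁻¹ (by simpa using h))
    rw [not_imp_comm.1 (hF y) hy, not_imp_comm.1 (hF _) hy']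
    simp

theorem IsBoundary.eq_one_of_mem_interior_fixedBy [T2Space X] [ContinuousConstSMul G X]
    (hX : IsBoundary G X) (hG : IsCstarSimple G) {x y : X}
    (hx : IsAmenable (MulAction.stabilizer G x)) {g : G}
    (hy : y ∈ interior (MulAction.fixedBy X g)) : g = 1 := by
  obtain ⟨φ, hφ, hφw⟩ := exists_state_permUnitary_eq_zero hG hx
  obtain ⟨F, hF₀, hFy, hF⟩ := exists_continuous_zero_one_of_isClosed
    isOpen_interior.isClosed_compl (isClosed_singleton (x := y))
    (Set.disjoint_singleton_right.2 (not_not.2 hy))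
  obtain ⟨k, hk⟩ := hX.exists_lt_re_map hφ (mulRep id) (c := 3 / 4) (F := F) (x := y)
    (by rw [hFy rfl]; norm_num)
  let a := mulRep id (smulPullback k F)
  change 3 / 4 < (φ a).re at hk
  have hfix : permUnitary G X (k⁻¹ * g * k) * a = a :=
    permUnitary_mul_mulRep_eq_of_forall_smul_eq fun z hz => by
      have hkz : k • z ∈ interior (MulAction.fixedBy X g) := by_contra fun h => hz (hF₀ h)
      have hgkz : k • z ∈ MulAction.fixedBy X g := interior_subset hkz
      simp [mul_smul, MulAction.mem_fixedBy.1 hgkz]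
  have ha₀ : 0 ≤ a := map_nonneg (mulRep id) fun z => (hF (k • z)).1
  have ha₁ : a ≤ 1 := map_one (mulRep (ι := X) id) ▸
    OrderHomClass.mono (mulRep id) fun z => (hF (k • z)).2
  have : Nontrivial (ℓ²(X, ℂ) →L[ℂ] ℓ²(X, ℂ)) := nontrivial_of_ne 1 0 fun h => by simp [h] at hφ
  have hle := norm_map_mul_one_sub_le hφ ha₀ ha₁
    (CStarRing.norm_of_mem_unitary (permUnitary G X (k⁻¹ * g * k)).2).le
  by_contra hg
  have hconj : k⁻¹ * g * k ≠ 1 := by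
    simpa only [ne_eq, inv_inv] using (conj_eq_one_iff (a := k⁻¹)).not.2 hg
  rw [mul_sub, mul_one, hfix, map_sub, hφw _ hconj, zero_sub, norm_neg] at hle
  have hsq := (Real.le_sqrt' (by linarith)).1 ((Complex.re_le_norm _).trans hle)
  nlinarith

end TopologicallyFree

theorem IsFurstenberg.stabilizer_eq_bot {Y : Type u} [TopologicalSpace Y] [CompactSpace Y]
    [T2Space Y] [MulAction G Y] [ContinuousConstSMul G Y] (hY : IsFurstenberg G Y)
    (hG : IsCstarSimple G) (y : Y) : MulAction.stabilizer G y = ⊥ := by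
  have := hY.extremallyDisconnected
  refine (Subgroup.eq_bot_iff_forall _).2 fun g hg => ?_
  have hopen : IsOpen (MulAction.fixedBy Y g) :=
    (isClopen_fixedPoints_of_extremallyDisconnected (Homeomorph.smul g)).isOpen
  exact hY.1.eq_one_of_mem_interior_fixedBy hG (hY.isAmenable_stabilizer y)
    (hopen.interior_eq.ge hg)

theorem IsFurstenberg.isCstarSimple_iff {Y : Type u} [TopologicalSpace Y] [CompactSpace Y]
    [T2Space Y] [MulAction G Y] [ContinuousConstSMul G Y] (hY : IsFurstenberg G Y) :
    IsCstarSimple G ↔ {H : Subgroup G | ∃ x : Y, H = MulAction.stabilizer G x} = {⊥} := by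
  obtain ⟨y⟩ := hY.1.1
  refine ⟨fun hG => Set.eq_singleton_iff_unique_mem.2
    ⟨⟨y, (hY.stabilizer_eq_bot hG y).symm⟩, ?_⟩, fun h => ?_⟩
  · rintro _ ⟨x, rfl⟩
    exact hY.stabilizer_eq_bot hG x
  · have hy : MulAction.stabilizer G y = ⊥ := h.le ⟨y, rfl⟩
    exact hY.1.isCstarSimple_of_free fun g hg => (Subgroup.eq_bot_iff_forall _).1 hy g hg

/-- A discrete group fails to be C*-simple if and only if the collection of point stabilizers
of its Furstenberg boundary is a non-trivial amenable uniformly recurrent subgroup. -/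
theorem not_cstarSimple_iff_stabilizers_nontrivial_amenable_urs (G : Type u) [Group G]
    (Y : Type u) [TopologicalSpace Y] [CompactSpace Y] [T2Space Y] [MulAction G Y]
    [ContinuousConstSMul G Y] (hY : IsFurstenberg G Y) :
    ¬ IsCstarSimple G ↔
      (IsURS G {H : Subgroup G | ∃ x : Y, H = MulAction.stabilizer G x} ∧
        (∀ H ∈ {H : Subgroup G | ∃ x : Y, H = MulAction.stabilizer G x}, IsAmenable H) ∧
        {H : Subgroup G | ∃ x : Y, H = MulAction.stabilizer G x} ≠ {(⊥ : Subgroup G)}) := by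
  rw [hY.isCstarSimple_iff]
  refine ⟨fun hne => ⟨hY.isURS_stabilizers, ?_, hne⟩, fun h => h.2.2⟩
  rintro _ ⟨y, rfl⟩
  exact hY.isAmenable_stabilizer y
end
end

section
/- Let G be a discrete group and let X be a uniformly recurrent subgroup of G that is countable as a set. Then X is finite, X equals the set {gHg⁻¹ : g ∈ G} of conjugates of any of its members H, and for every H ∈ X the normalizer N_G(H) has finite index in G. -/
noncomputable section
open scoped ENNReal ComplexOrder
open MeasureTheory
set_option maxHeartbeats 1000000
set_option synthInstance.maxHeartbeats 1000000

universe u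

variable {G : Type u} [Group G]

/-! A countable compact Hausdorff space has an isolated point by Baire's theorem. If a group acts
minimally on such a space, every orbit passes through that point, so the action is transitive,
and by compactness finitely many translates of the point cover the space, which is therefore
finite. The Chabauty space of a discrete group is compact Hausdorff, so this applies to the
conjugation action on a countable uniformly recurrent subgroup, and the index of the normalizer
of a member is the size of its orbit. -/

open MulAction Topology
open scoped Pointwise

section MinimalAction

variable {α : Type*} [TopologicalSpace α]

theorem exists_isOpen_singleton_of_countable [Countable α] [Nonempty α] [T1Space α]
    [BaireSpace α] : ∃ x : α, IsOpen ({x} : Set α) := by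
  obtain ⟨x, hx⟩ := nonempty_interior_of_iUnion_of_closed
    (fun x : α ↦ isClosed_singleton (x := x)) (Set.iUnion_of_singleton α)
  have hint : interior {x} = {x} := hx.subset_singleton_iff.mp interior_subset
  exact ⟨x, hint ▸ isOpen_interior⟩

variable (M : Type*) [Group M] [MulAction M α] [IsMinimal M α] {x : α}

theorem isPretransitive_of_isMinimal_of_isOpen_singleton (hx : IsOpen ({x} : Set α)) :
    IsPretransitive M α := by
  refine (isPretransitive_iff_base x).mpr fun y ↦ ?_
  obtain ⟨m, hm⟩ := hx.exists_smul_mem M y (Set.singleton_nonempty x)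
  exact ⟨m⁻¹, inv_smul_eq_iff.mpr (Set.mem_singleton_iff.mp hm).symm⟩

theorem finite_of_isMinimal_of_isOpen_singleton [CompactSpace α] [ContinuousConstSMul M α]
    (hx : IsOpen ({x} : Set α)) : Finite α := by
  obtain ⟨I, hI⟩ := isCompact_univ.exists_finite_cover_smul M hx (Set.singleton_nonempty x)
  have hfin : (⋃ m ∈ I, m • ({x} : Set α)).Finite :=
    I.finite_toSet.biUnion fun _ _ ↦ (Set.finite_singleton x).smul_set
  exact Set.finite_univ_iff.mp (hfin.subset hI)

variable [Countable α] [T1Space α] [BaireSpace α]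

theorem isPretransitive_of_isMinimal_of_countable : IsPretransitive M α := by
  rcases isEmpty_or_nonempty α with _ | _
  · exact ⟨isEmptyElim⟩
  · obtain ⟨_, hx⟩ := exists_isOpen_singleton_of_countable (α := α)
    exact isPretransitive_of_isMinimal_of_isOpen_singleton M hx

theorem finite_of_isMinimal_of_countable [CompactSpace α] [ContinuousConstSMul M α] :
    Finite α := by
  rcases isEmpty_or_nonempty α with _ | _
  · exact inferInstance
  · obtain ⟨_, hx⟩ := exists_isOpen_singleton_of_countable (α := α)
    exact finite_of_isMinimal_of_isOpen_singleton M hx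

end MinimalAction

theorem coe_subMulAction_eq_orbit {M α : Type*} [Monoid M] [MulAction M α]
    (p : SubMulAction M α) [IsPretransitive M p] (x : p) : (p : Set α) = orbit M (x : α) := by
  rw [← SubMulAction.val_image_orbit, orbit_eq_univ, Set.image_univ]
  exact Subtype.range_coe.symm

section Chabauty

theorem isInducing_boolIndicator :
    IsInducing fun H : Subgroup G ↦ (H : Set G).boolIndicator := by
  refine ⟨congrArg (TopologicalSpace.induced · Pi.topologicalSpace) ?_⟩
  funext H g
  rw [Bool.eq_iff_iff, ← Set.mem_iff_boolIndicator, SetLike.mem_coe]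
  exact @decide_eq_true_iff _ (Classical.propDecidable _)

theorem injective_boolIndicator :
    Function.Injective fun H : Subgroup G ↦ (H : Set G).boolIndicator := by
  intro H K h
  ext g
  rw [← SetLike.mem_coe, ← SetLike.mem_coe, Set.mem_iff_boolIndicator, Set.mem_iff_boolIndicator]
  exact Bool.eq_iff_iff.mp (congrFun h g)

theorem range_boolIndicator :
    Set.range (fun H : Subgroup G ↦ (H : Set G).boolIndicator) =
      {f | f 1 = true ∧ (∀ a b, f a = true ∧ f b = true → f (a * b) = true) ∧
        ∀ a, f a = true → f a⁻¹ = true} := by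
  ext f
  constructor
  · rintro ⟨H, rfl⟩
    simp only [Set.mem_ofPred_eq, ← Set.mem_iff_boolIndicator, SetLike.mem_coe]
    exact ⟨H.one_mem, fun _ _ h ↦ H.mul_mem h.1 h.2, fun _ ↦ H.inv_mem⟩
  · rintro ⟨hone, hmul, hinv⟩
    let H : Subgroup G :=
      { carrier := {g | f g = true}
        one_mem' := hone
        mul_mem' := fun ha hb ↦ hmul _ _ ⟨ha, hb⟩
        inv_mem' := fun ha ↦ hinv _ ha }
    refine ⟨H, funext fun g ↦ ?_⟩
    exact Bool.eq_iff_iff.mpr (Set.mem_iff_boolIndicator (H : Set G) g).symm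

theorem isClosed_range_boolIndicator :
    IsClosed (Set.range fun H : Subgroup G ↦ (H : Set G).boolIndicator) := by
  have hclopen (g : G) : IsClopen {f : G → Bool | f g = true} :=
    (isClopen_discrete {true}).preimage (continuous_apply g)
  rw [range_boolIndicator]
  refine (hclopen 1).isClosed.and (.and ?_ ?_)
  · simp only [Set.ofPred_forall]
    exact isClosed_iInter fun a ↦ isClosed_iInter fun b ↦
      isClosed_imp ((hclopen a).isOpen.and (hclopen b).isOpen) (hclopen (a * b)).isClosed
  · simp only [Set.ofPred_forall]
    exact isClosed_iInter fun a ↦ isClosed_imp (hclopen a).isOpen (hclopen a⁻¹).isClosed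

theorem isClosedEmbedding_boolIndicator :
    IsClosedEmbedding fun H : Subgroup G ↦ (H : Set G).boolIndicator :=
  ⟨⟨isInducing_boolIndicator, injective_boolIndicator⟩, isClosed_range_boolIndicator⟩

instance : CompactSpace (Subgroup G) :=
  isClosedEmbedding_boolIndicator.compactSpace

instance : T2Space (Subgroup G) :=
  isClosedEmbedding_boolIndicator.isEmbedding.t2Space

instance {M : Type*} [Group M] [MulDistribMulAction M G] :
    ContinuousConstSMul M (Subgroup G) where
  continuous_const_smul m := by
    refine isInducing_boolIndicator.continuous_iff.mpr (continuous_pi fun g ↦ ?_)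
    have hsmul (H : Subgroup G) :
        ((m • H : Subgroup G) : Set G).boolIndicator g = (H : Set G).boolIndicator (m⁻¹ • g) := by
      rw [Bool.eq_iff_iff, ← Set.mem_iff_boolIndicator, ← Set.mem_iff_boolIndicator,
        SetLike.mem_coe, SetLike.mem_coe, Subgroup.mem_pointwise_smul_iff_inv_smul_mem]
    exact ((continuous_apply (m⁻¹ • g)).comp isInducing_boolIndicator.continuous).congr
      fun H ↦ (hsmul H).symm

end Chabauty

section Conjugation

theorem conjugates_eq_orbit (H : Subgroup G) :
    {K : Subgroup G | ∃ g : G, K = conjSub g H} = orbit (ConjAct G) H := by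
  ext K
  exact ⟨fun ⟨g, hg⟩ ↦ ⟨ConjAct.toConjAct g, hg.symm⟩,
    fun ⟨g, hg⟩ ↦ ⟨ConjAct.ofConjAct g, hg.symm⟩⟩

theorem index_normalizer_eq_ncard_orbit (H : Subgroup G) :
    (Subgroup.normalizer (H : Set G)).index = (orbit (ConjAct G) H).ncard := by
  have hcomap : Subgroup.normalizer (H : Set G) =
      (stabilizer (ConjAct G) H).comap (ConjAct.toConjAct (G := G)).toMonoidHom := by
    ext g
    exact Subgroup.conjAct_pointwise_smul_iff.symm
  rw [hcomap, Subgroup.index_comap_of_surjective _ ConjAct.toConjAct.surjective,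
    index_stabilizer]

end Conjugation

namespace IsURS

variable {X : Set (Subgroup G)}

/-- A uniformly recurrent subgroup, bundled with its conjugation action. -/
def toSubMulAction (hX : IsURS G X) : SubMulAction (ConjAct G) (Subgroup G) where
  carrier := X
  smul_mem' g H hH := hX.2.2.1 (ConjAct.ofConjAct g) H hH

variable (hX : IsURS G X)

instance : CompactSpace hX.toSubMulAction :=
  isCompact_iff_compactSpace.mp hX.2.1.isCompact

instance : ContinuousConstSMul (ConjAct G) hX.toSubMulAction :=
  IsInducing.subtypeVal.continuousConstSMul id rfl

instance : IsMinimal (ConjAct G) hX.toSubMulAction where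
  dense_orbit H := by
    refine Subtype.dense_iff.mpr fun K hK ↦ ?_
    rw [SubMulAction.val_image_orbit, ← conjugates_eq_orbit]
    exact hX.2.2.2 H H.2 K hK

include hX

theorem finite_of_countable (hc : X.Countable) : X.Finite := by
  have : Countable hX.toSubMulAction := hc.to_subtype
  have hfin : Finite hX.toSubMulAction := finite_of_isMinimal_of_countable (ConjAct G)
  exact Set.finite_coe_iff.mp hfin

theorem eq_orbit_of_countable (hc : X.Countable) {H : Subgroup G} (hH : H ∈ X) :
    X = orbit (ConjAct G) H := by
  have : Countable hX.toSubMulAction := hc.to_subtype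
  have : IsPretransitive (ConjAct G) hX.toSubMulAction :=
    isPretransitive_of_isMinimal_of_countable (ConjAct G)
  exact coe_subMulAction_eq_orbit hX.toSubMulAction ⟨H, hH⟩

end IsURS

/-- A uniformly recurrent subgroup that is countable as a set is finite, consists exactly of
the conjugates of any of its members, and the normalizer of each of its members has finite
index. -/
theorem urs_countable_structure (G : Type u) [Group G] (X : Set (Subgroup G))
    (hX : IsURS G X) (hc : X.Countable) :
    X.Finite ∧ (∀ H ∈ X, X = {K : Subgroup G | ∃ g : G, K = conjSub g H}) ∧
      ∀ H ∈ X, (Subgroup.normalizer (H : Set G)).index ≠ 0 := by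
  have hfin : X.Finite := hX.finite_of_countable hc
  refine ⟨hfin, fun H hH ↦ ?_, fun H hH ↦ ?_⟩
  · rw [conjugates_eq_orbit]
    exact hX.eq_orbit_of_countable hc hH
  · rw [index_normalizer_eq_ncard_orbit, ← hX.eq_orbit_of_countable hc hH]
    exact ((Set.ncard_pos hfin).mpr hX.1).ne'
end
end
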